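/- Let H be a pointed Hopf algebra over an algebraically closed field K and let Q be the Ext-quiver of the category of right H-comodules. Suppose there is a finite subquiver Q′ ⊆ Q such that the finite-dimensional subcoalgebra KQ′₁ of H (spanned by the vertices and arrows of Q′) is of infinite corepresentation type. Then H is not of discrete corepresentation type. In particular, if Q′ is a bipartite quiver (every vertex a sink or a source) whose underlying graph is not a disjoint union of Dynkin diagrams, then H is not of discrete corepresentation type. -/

import Mathlib

open TensorProduct



section Basic

variable (K : Type) [CommRing K] (H : Type) [AddCommGroup H] [Module K H] [Coalgebra K H]

/-- A grouplike element of a coalgebra. -/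
def IsGrouplike (g : H) : Prop :=
  Coalgebra.counit (R := K) g = 1 ∧ Coalgebra.comul (R := K) g = g ⊗ₜ[K] g

/-- The space `P(g,h)` of `(g,h)`-skew primitive elements. -/
noncomputable def skewPrim (g h : H) : Submodule K H :=
  LinearMap.ker (Coalgebra.comul (R := K) (A := H)
    - (TensorProduct.mk K H H g + (TensorProduct.mk K H H).flip h))

lemma mem_skewPrim {g h x : H} :
    x ∈ skewPrim K H g h ↔ Coalgebra.comul (R := K) x = g ⊗ₜ[K] x + x ⊗ₜ[K] h := by
  rw [skewPrim, LinearMap.mem_ker, LinearMap.sub_apply, sub_eq_zero, LinearMap.add_apply]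
  rfl

/-- A submodule which is a subcoalgebra. -/
def IsSubcoalgebra (D : Submodule K H) : Prop :=
  ∀ x ∈ D, Coalgebra.comul (R := K) x ∈ LinearMap.range (TensorProduct.map D.subtype D.subtype)

/-- A coalgebra is pointed if every simple subcoalgebra is one-dimensional. -/
def IsPointedCoalgebra : Prop :=
  ∀ D : Submodule K H, IsSubcoalgebra K H D → D ≠ ⊥ →
    (∀ D' : Submodule K H, IsSubcoalgebra K H D' → D' ≤ D → D' = ⊥ ∨ D' = D) →
    Module.finrank K ↥D = 1

end Basic

section Comodules

variable (K : Type) [CommRing K] (H : Type) [AddCommGroup H] [Module K H] [Coalgebra K H]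

/-- A (finite or infinite dimensional) right `H`-comodule. -/
structure Comod where
  carrier : Type
  [acg : AddCommGroup carrier]
  [mod : Module K carrier]
  ρ : carrier →ₗ[K] carrier ⊗[K] H
  counit_comp : ∀ m : carrier,
    (TensorProduct.rid K carrier)
      ((LinearMap.lTensor carrier (Coalgebra.counit (R := K) (A := H))) (ρ m)) = m
  coassoc : ∀ m : carrier,
    (LinearMap.lTensor carrier (Coalgebra.comul (R := K) (A := H))) (ρ m)
      = (TensorProduct.assoc K carrier H H) ((LinearMap.rTensor H ρ) (ρ m))

attribute [instance] Comod.acg Comod.mod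

/-- A morphism of right `H`-comodules. -/
structure ComodHom (M N : Comod K H) where
  toLin : M.carrier →ₗ[K] N.carrier
  compat : ∀ m : M.carrier, N.ρ (toLin m) = (LinearMap.rTensor H toLin) (M.ρ m)

/-- Isomorphism of comodules. -/
def ComodIso (M N : Comod K H) : Prop :=
  ∃ f : ComodHom K H M N, Function.Bijective f.toLin

/-- An indecomposable comodule: it is nonzero, and (equivalently to the usual definition,
since idempotents split in comodule categories) every idempotent endomorphism is `0` or `1`. -/
def Comod.Indec (M : Comod K H) : Prop :=
  (∃ m : M.carrier, m ≠ 0) ∧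
    ∀ f : ComodHom K H M M, f.toLin ∘ₗ f.toLin = f.toLin →
      f.toLin = 0 ∨ f.toLin = LinearMap.id

/-- A submodule of a comodule which is a subcomodule. -/
def IsSubcomod (M : Comod K H) (N : Submodule K M.carrier) : Prop :=
  ∀ m ∈ N, M.ρ m ∈ LinearMap.range (LinearMap.rTensor H N.subtype)

/-- The coaction of `M` factors through the subcoalgebra `D`, i.e. `M` is a `D`-comodule. -/
def CoactsThrough (M : Comod K H) (D : Submodule K H) : Prop :=
  ∀ m : M.carrier, M.ρ m ∈ LinearMap.range (LinearMap.lTensor M.carrier D.subtype)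

/-- `M` has dimension vector `d` : it admits a composition series whose successive quotients
are the one-dimensional comodules associated to grouplike elements, where for every `h` the
grouplike `h` occurs exactly `d h` times. -/
def HasDimVector (M : Comod K H) (d : H → ℕ) : Prop :=
  ∃ (k : ℕ) (F : Fin (k+1) → Submodule K M.carrier) (g : Fin k → H),
    F 0 = ⊥ ∧ F (Fin.last k) = ⊤ ∧
    (∀ i : Fin k, F i.castSucc ≤ F i.succ) ∧
    (∀ i : Fin (k+1), IsSubcomod K H M (F i)) ∧
    (∀ i : Fin k, IsGrouplike K H (g i)) ∧
    (∀ i : Fin k, ∃ m : M.carrier, m ∈ F i.succ ∧ m ∉ F i.castSucc ∧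
        F i.succ = F i.castSucc ⊔ Submodule.span K {m}) ∧
    (∀ i : Fin k, ∀ m ∈ F i.succ,
        M.ρ m - m ⊗ₜ[K] (g i) ∈ LinearMap.range (LinearMap.rTensor H (F i.castSucc).subtype)) ∧
    (∀ h : H, d h = Nat.card {i : Fin k // g i = h})

/-- A pointed coalgebra is of discrete corepresentation type if for every dimension vector `d`
there are only finitely many isomorphism classes of indecomposable comodules with
dimension vector `d`. -/
def DiscreteCorepType : Prop :=
  ∀ d : H → ℕ, ∃ (N : ℕ) (R : Fin N → Comod K H),
    ∀ M : Comod K H, M.Indec K H → HasDimVector K H M d → ∃ i, ComodIso K H M (R i)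

/-- A subcoalgebra `D ≤ H` is of finite corepresentation type: there are only finitely many
isomorphism classes of finite-dimensional indecomposable comodules whose coaction factors
through `D`. -/
def FinCorepTypeOn (D : Submodule K H) : Prop :=
  ∃ (N : ℕ) (R : Fin N → Comod K H),
    ∀ M : Comod K H, M.Indec K H → Module.Finite K M.carrier → CoactsThrough K H M D →
      ∃ i, ComodIso K H M (R i)

/-- A coalgebra is of finite corepresentation type. -/
def FinCorepType : Prop := FinCorepTypeOn K H ⊤

end Comodules


theorem qform_finite {W A : Type} [Fintype W] [Fintype A] (src tgt : A → W)
    (hpos : ∀ d : W → ℕ, d ≠ 0 → ∑ e, d (src e) * d (tgt e) < ∑ w, d w ^ 2) :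
    {d : W → ℕ | ∑ w, d w ^ 2 ≤ 1 + ∑ e, d (src e) * d (tgt e)}.Finite := by
  classical
  have hposZ : ∀ d : W → ℤ, d ≠ 0 → ∑ e, d (src e) * d (tgt e) < ∑ w, d w ^ 2 := by
    intro d hd
    have h := hpos (fun w => (d w).natAbs) (by
      intro h; apply hd; funext w; simpa using congrFun h w)
    have h' : ∑ e, |d (src e)| * |d (tgt e)| < ∑ w, |d w| ^ 2 := by
      have : ((∑ e, (d (src e)).natAbs * (d (tgt e)).natAbs : ℕ) : ℤ) <
        ((∑ w, (d w).natAbs ^ 2 : ℕ) : ℤ) := by exact_mod_cast h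
      push_cast at this
      simpa using this
    calc ∑ e, d (src e) * d (tgt e) ≤ ∑ e, |d (src e)| * |d (tgt e)| :=
          Finset.sum_le_sum (fun e _ => by rw [← abs_mul]; exact le_abs_self _)
      _ < ∑ w, |d w| ^ 2 := h'
      _ = ∑ w, d w ^ 2 := by simp
  apply Set.Finite.of_finite_image (f := fun (d : W → ℕ) (w : W) => ((d w : ℕ) : ZMod 3))
  · exact Set.toFinite _
  · intro d hd d' hd' hdd
    by_contra hne
    have hmod : ∀ w, ∃ z : ℤ, (d w : ℤ) - d' w = 3 * z := by
      intro w
      have h := congrFun hdd w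
      simp only at h
      have h2 : (((d w : ℤ) - d' w : ℤ) : ZMod 3) = 0 := by
        push_cast; rw [h]; simp
      exact (ZMod.intCast_zmod_eq_zero_iff_dvd _ 3).1 h2
    choose z hz using hmod
    have hz0 : z ≠ 0 := by
      intro h0; apply hne; funext w
      have := hz w
      rw [h0] at this; simp at this; omega
    have h1 := hposZ z hz0
    have h2 : ∑ e, ((d (src e) : ℤ) + d' (src e)) * ((d (tgt e) : ℤ) + d' (tgt e)) ≤
        ∑ w, ((d w : ℤ) + d' w) ^ 2 := by
      by_cases h0 : (fun w => (d w : ℤ) + d' w) = 0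
      · have h0' : ∀ w, (d w : ℤ) + d' w = 0 := fun w => congrFun h0 w
        simp [h0']
      · exact (hposZ _ h0).le
    have h3 : ∑ e, ((d (src e) : ℤ) - d' (src e)) * ((d (tgt e) : ℤ) - d' (tgt e)) =
       9 * ∑ e, z (src e) * z (tgt e) := by
      rw [Finset.mul_sum]; refine Finset.sum_congr rfl fun e _ => ?_
      rw [hz, hz]; ring
    have h4 : ∑ w, ((d w : ℤ) - d' w) ^ 2 = 9 * ∑ w, z w ^ 2 := by
      rw [Finset.mul_sum]; refine Finset.sum_congr rfl fun e _ => ?_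
      rw [hz]; ring
    have hd1 : ∑ w, (d w : ℤ) ^ 2 ≤ 1 + ∑ e, (d (src e) : ℤ) * d (tgt e) := by exact_mod_cast hd
    have hd2 : ∑ w, (d' w : ℤ) ^ 2 ≤ 1 + ∑ e, (d' (src e) : ℤ) * d' (tgt e) := by
      exact_mod_cast hd'
    have e1 : ∑ w, ((d w : ℤ) - d' w) ^ 2 + ∑ w, ((d w : ℤ) + d' w) ^ 2 =
       2 * ∑ w, (d w : ℤ) ^ 2 + 2 * ∑ w, (d' w : ℤ) ^ 2 := by
      simp only [Finset.mul_sum, ← Finset.sum_add_distrib]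
      exact Finset.sum_congr rfl fun e _ => by ring
    have e2 : ∑ e, ((d (src e) : ℤ) - d' (src e)) * ((d (tgt e) : ℤ) - d' (tgt e)) +
       ∑ e, ((d (src e) : ℤ) + d' (src e)) * ((d (tgt e) : ℤ) + d' (tgt e)) =
       2 * ∑ e, (d (src e) : ℤ) * d (tgt e) + 2 * ∑ e, (d' (src e) : ℤ) * d' (tgt e) := by
      simp only [Finset.mul_sum, ← Finset.sum_add_distrib]
      exact Finset.sum_congr rfl fun e _ => by ring
    linarith


theorem exists_rel {σ τ K : Type} [Field K] [Fintype σ] [Fintype τ]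
    (h : Fintype.card σ < Fintype.card τ) (F : τ → MvPolynomial σ K) :
    ∃ G : MvPolynomial τ K, G ≠ 0 ∧ MvPolynomial.aeval F G = 0 := by
  have hn : ¬ AlgebraicIndependent K F := by
    intro hF
    have h1 := hF.cardinalMk_le_trdeg
    rw [MvPolynomial.trdeg_of_isDomain] at h1
    simp at h1
    omega
  rw [algebraicIndependent_iff] at hn
  push Not at hn
  obtain ⟨G, h1, h2⟩ := hn
  exact ⟨G, h2, h1⟩

theorem orbit_count {K V A : Type} [Field K] [Infinite K] [Fintype V] [Fintype A]
    (s t : A → V) (d : V ⊕ V → ℕ) (hd : d ≠ 0)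
    (Φ : Set (∀ e, Matrix (Fin (d (.inl (s e)))) (Fin (d (.inr (t e)))) K)) (hΦ : Φ.Finite)
    (hcov : ∀ φ' : ∀ e, Matrix (Fin (d (.inl (s e)))) (Fin (d (.inr (t e)))) K,
      ∃ φ ∈ Φ, ∃ Z : ∀ w, Matrix (Fin (d w)) (Fin (d w)) K,
        ∀ e, φ' e = Z (.inl (s e)) * φ e * Z (.inr (t e))) :
    ∑ e, d (.inr (t e)) * d (.inl (s e)) < ∑ w, d w ^ 2 := by
  classical
  by_contra hlt
  push Not at hlt
  let σ := Σ w : V ⊕ V, Fin (d w) × Fin (d w)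
  let τ := Σ e : A, Fin (d (.inl (s e))) × Fin (d (.inr (t e)))
  have hcard : Fintype.card σ ≤ Fintype.card τ := by
    simp only [σ, τ, Fintype.card_sigma, Fintype.card_prod, Fintype.card_fin]
    calc _ = ∑ w, d w ^ 2 := Finset.sum_congr rfl fun _ _ => by ring
      _ ≤ _ := hlt
      _ = _ := Finset.sum_congr rfl fun _ _ => by ring
  have hσ : Nonempty σ := by
    obtain ⟨w, hw⟩ := Function.ne_iff.1 hd
    have : 0 < d w := Nat.pos_of_ne_zero hw
    exact ⟨⟨w, ⟨0, this⟩, ⟨0, this⟩⟩⟩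
  have hτ : Nonempty τ := by
    rw [← Fintype.card_pos_iff] at hσ ⊢
    omega
  obtain ⟨τ0⟩ := hτ
  let var : ∀ σ0 : σ, σ → MvPolynomial {x : σ // x ≠ σ0} K :=
    fun σ0 x => if h : x = σ0 then 1 else MvPolynomial.X ⟨x, h⟩
  let F : (∀ e, Matrix (Fin (d (.inl (s e)))) (Fin (d (.inr (t e)))) K) → ∀ σ0 : σ,
      τ → MvPolynomial {x : σ // x ≠ σ0} K := fun φ σ0 x =>
    ∑ j, ∑ i, var σ0 ⟨.inl (s x.1), x.2.1, i⟩ * MvPolynomial.C (φ x.1 i j) *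
      var σ0 ⟨.inr (t x.1), j, x.2.2⟩
  have hG : ∀ φ σ0, ∃ G : MvPolynomial τ K, G ≠ 0 ∧ MvPolynomial.aeval (F φ σ0) G = 0 := by
    intro φ σ0
    apply exists_rel
    have := Fintype.card_subtype_lt (p := fun x : σ => x ≠ σ0) (x := σ0) (by simp)
    omega
  choose G hG0 hG1 using hG
  let P : MvPolynomial τ K := MvPolynomial.X τ0 * ∏ φ ∈ hΦ.toFinset, ∏ σ0, G φ σ0
  have hP : P ≠ 0 := mul_ne_zero (MvPolynomial.X_ne_zero _)
    (Finset.prod_ne_zero_iff.2 fun φ _ => Finset.prod_ne_zero_iff.2 fun σ0 _ => hG0 φ σ0)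
  obtain ⟨y, hy⟩ : ∃ y : τ → K, MvPolynomial.eval y P ≠ 0 := by
    by_contra hcon
    push Not at hcon
    exact hP (MvPolynomial.funext (fun y => by simpa using hcon y))
  let φ' : ∀ e, Matrix (Fin (d (.inl (s e)))) (Fin (d (.inr (t e)))) K := fun e i j => y ⟨e, i, j⟩
  obtain ⟨φ, hφ, Z, hZ⟩ := hcov φ'
  simp only [P, map_mul, MvPolynomial.eval_X, map_prod, ne_eq, mul_eq_zero, not_or] at hy
  obtain ⟨hy0, hy1⟩ := hy
  -- find a nonzero entry
  obtain ⟨v, i0, j0, hne⟩ : ∃ v i0 j0, Z (.inl v) i0 j0 ≠ 0 := by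
    by_contra hcon
    push Not at hcon
    apply hy0
    have : φ' τ0.1 τ0.2.1 τ0.2.2 = 0 := by
      rw [hZ]
      have : Z (.inl (s τ0.1)) = 0 := by ext i j; exact hcon _ _ _
      rw [this]; simp
    exact this
  let σ0 : σ := ⟨.inl v, i0, j0⟩
  let c := Z (.inl v) i0 j0
  let z : σ → K := fun x => match x with
    | ⟨.inl v, i, j⟩ => c⁻¹ * Z (.inl v) i j
    | ⟨.inr v, i, j⟩ => c * Z (.inr v) i j
  have hz0 : z σ0 = 1 := inv_mul_cancel₀ hne
  let z' : {x : σ // x ≠ σ0} → K := fun x => z x.1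
  have hvar : ∀ x, MvPolynomial.eval z' (var σ0 x) = z x := by
    intro x
    by_cases h : x = σ0
    · subst h; simp [var, hz0]
    · simp [var, h, z']
  have hF : ∀ x, MvPolynomial.eval z' (F φ σ0 x) = y x := by
    rintro ⟨e, i, j⟩
    have : y ⟨e, i, j⟩ = φ' e i j := rfl
    rw [this, hZ, Matrix.mul_apply]
    simp only [F, map_sum, map_mul, hvar, MvPolynomial.eval_C, Matrix.mul_apply, Finset.sum_mul]
    refine Finset.sum_congr rfl fun k _ => Finset.sum_congr rfl fun l _ => ?_
    simp only [z]
    have hc : c ≠ 0 := hne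
    field_simp
  have key : MvPolynomial.eval y (G φ σ0) = 0 := by
    have h := congrArg (MvPolynomial.eval z') (hG1 φ σ0)
    rw [map_zero] at h
    rw [← h, MvPolynomial.aeval_def]
    rw [MvPolynomial.eval₂_comp_left]
    have : (⇑(MvPolynomial.eval z') ∘ F φ σ0) = y := funext hF
    rw [this]
    have h2 : (MvPolynomial.eval z').comp (algebraMap K (MvPolynomial {x : σ // x ≠ σ0} K)) = RingHom.id K := by
      ext a; simp [MvPolynomial.algebraMap_eq]
    rw [h2]
    rfl
  apply hy1
  apply Finset.prod_eq_zero (hΦ.mem_toFinset.2 hφ)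
  exact Finset.prod_eq_zero (Finset.mem_univ σ0) key


theorem factor_of_ker_le {K M N P : Type} [Field K] [AddCommGroup M] [Module K M]
    [AddCommGroup N] [Module K N] [AddCommGroup P] [Module K P]
    (f : M →ₗ[K] N) (g : M →ₗ[K] P) (h : ∀ x, f x = 0 → g x = 0) :
    ∃ k : N →ₗ[K] P, ∀ x, k (f x) = g x := by
  have h' : LinearMap.ker f ≤ LinearMap.ker g := fun x hx => h x hx
  obtain ⟨k, hk⟩ := LinearMap.exists_extend
    (((LinearMap.ker f).liftQ g h') ∘ₗ f.quotKerEquivRange.symm.toLinearMap)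
  refine ⟨k, fun x => ?_⟩
  have := LinearMap.congr_fun hk ⟨f x, LinearMap.mem_range_self f x⟩
  simp only [LinearMap.comp_apply, Submodule.subtype_apply, LinearEquiv.coe_coe] at this
  rw [this]
  have h2 : f.quotKerEquivRange.symm ⟨f x, LinearMap.mem_range_self f x⟩ =
      (LinearMap.ker f).mkQ x := by
    rw [LinearEquiv.symm_apply_eq]; rfl
  rw [h2]; simp

theorem unit_or_nilpotent {K R : Type} [Field K] [Ring R] [Algebra K R] [Module.Finite K R]
    (hid : ∀ e : R, e * e = e → e = 0 ∨ e = 1) (a : R) : IsUnit a ∨ IsNilpotent a := by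
  have hint : IsIntegral K a := Algebra.IsIntegral.isIntegral a
  have hp0 := minpoly.ne_zero hint
  obtain ⟨r, hr, hr0⟩ := Polynomial.exists_eq_pow_rootMultiplicity_mul_and_not_dvd
    (minpoly K a) hp0 0
  set k := Polynomial.rootMultiplicity 0 (minpoly K a)
  simp only [map_zero, sub_zero] at hr hr0
  have hcop : IsCoprime ((Polynomial.X : Polynomial K) ^ k) r := by
    apply IsCoprime.pow_left
    exact (Polynomial.irreducible_X.coprime_iff_not_dvd).2 hr0
  obtain ⟨u, v, huv⟩ := hcop
  have hz : Polynomial.aeval a (Polynomial.X ^ k * r) = 0 := by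
    rw [← hr]; exact minpoly.aeval K a
  have hE := hid (Polynomial.aeval a (u * Polynomial.X ^ k)) (by
    rw [← map_mul]
    have : u * Polynomial.X ^ k * (u * Polynomial.X ^ k) =
      u * Polynomial.X ^ k - u * v * (Polynomial.X ^ k * r) := by
      linear_combination (u * Polynomial.X ^ k) * huv
    rw [this, map_sub, map_mul _ (u * v), hz]; simp)
  rcases hE with hE | hE
  · right
    refine ⟨k, ?_⟩
    have h1 : Polynomial.aeval a (v * r) = 1 := by
      have := congrArg (Polynomial.aeval a) huv
      rw [map_add, hE] at this; simpa using this
    have h2 : a ^ k = Polynomial.aeval a (Polynomial.X ^ k * (v * r)) := by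
      rw [map_mul, h1]; simp
    rw [h2, show Polynomial.X ^ k * (v * r) = v * (Polynomial.X ^ k * r) by ring, map_mul, hz]
    simp
  · by_cases hk : k = 0
    · have hzr : Polynomial.aeval a r = 0 := by simpa [hk] using hz
      obtain ⟨b, c, hbc⟩ := (Polynomial.irreducible_X.coprime_iff_not_dvd).2 hr0
      left
      have h1 : Polynomial.aeval a b * a = 1 := by
        have := congrArg (Polynomial.aeval a) hbc
        simpa [hzr] using this
      have h2 : a * Polynomial.aeval a b = 1 := by
        rw [← h1]
        have := congrArg (Polynomial.aeval a) (mul_comm Polynomial.X b)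
        simpa using this
      exact ⟨⟨a, _, h2, h1⟩, rfl⟩
    · left
      obtain ⟨j, hj⟩ := Nat.exists_eq_succ_of_ne_zero hk
      rw [hj] at hE
      have h1 : Polynomial.aeval a (u * Polynomial.X ^ j) * a = 1 := by
        rw [← hE]; simp [pow_succ, mul_assoc]
      have h2 : a * Polynomial.aeval a (u * Polynomial.X ^ j) = 1 := by
        rw [← hE]
        have := congrArg (Polynomial.aeval a)
          (show Polynomial.X * (u * Polynomial.X ^ j) = u * Polynomial.X ^ (j+1) by ring)
        simpa using this
      exact ⟨⟨a, _, h2, h1⟩, rfl⟩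

section QR
variable {K W A : Type} [Field K] {src tgt : A → W} {X : W → Type}
  [∀ w, AddCommGroup (X w)] [∀ w, Module K (X w)]

def QEnd (φ : ∀ e, X (src e) →ₗ[K] X (tgt e)) (f : ∀ w, X w →ₗ[K] X w) : Prop :=
  ∀ e x, φ e (f (src e) x) = f (tgt e) (φ e x)

def QIndec (φ : ∀ e, X (src e) →ₗ[K] X (tgt e)) : Prop :=
  (∃ w, ∃ x : X w, x ≠ 0) ∧ ∀ f : ∀ w, X w →ₗ[K] X w, QEnd φ f →
    (∀ w x, f w (f w x) = f w x) → (∀ w x, f w x = 0) ∨ (∀ w x, f w x = x)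

def QBrick (φ : ∀ e, X (src e) →ₗ[K] X (tgt e)) : Prop :=
  ∀ f : ∀ w, X w →ₗ[K] X w, QEnd φ f → ∃ c : K, ∀ w x, f w x = c • x

def QAlg (φ : ∀ e, X (src e) →ₗ[K] X (tgt e)) : Subalgebra K (∀ w, Module.End K (X w)) where
  carrier := {f | QEnd φ f}
  mul_mem' := by
    intro f g hf hg e x
    simp only [Pi.mul_apply, Module.End.mul_apply]
    rw [hf, hg]
  add_mem' := by
    intro f g hf hg e x
    simp only [Pi.add_apply, LinearMap.add_apply, map_add]
    rw [hf, hg]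
  algebraMap_mem' := by
    intro r e x
    simp [Module.algebraMap_end_apply]

def QDelta (φ : ∀ e, X (src e) →ₗ[K] X (tgt e)) :
    (∀ w, X w →ₗ[K] X w) →ₗ[K] (∀ e, X (src e) →ₗ[K] X (tgt e)) where
  toFun f := fun e => φ e ∘ₗ f (src e) - f (tgt e) ∘ₗ φ e
  map_add' := by intro f g; funext e; ext x; simp; abel
  map_smul' := by intro c f; funext e; ext x; simp [smul_sub]

variable [Fintype W] [Fintype A] [∀ w, Module.Finite K (X w)]

theorem brick_rank (φ : ∀ e, X (src e) →ₗ[K] X (tgt e)) (hb : QBrick φ) :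
    ∑ w, Module.finrank K (X w) ^ 2 ≤ Module.finrank K (LinearMap.range (QDelta φ)) + 1 := by
  have h := LinearMap.finrank_range_add_finrank_ker (QDelta φ)
  have h1 : Module.finrank K (∀ w, X w →ₗ[K] X w) = ∑ w, Module.finrank K (X w) ^ 2 := by
    rw [Module.finrank_pi_fintype]
    exact Finset.sum_congr rfl fun w _ => by rw [Module.finrank_linearMap, sq]
  have h2 : Module.finrank K (LinearMap.ker (QDelta φ)) ≤ 1 := by
    have hle : LinearMap.ker (QDelta φ) ≤
        Submodule.span K {(fun w => LinearMap.id : ∀ w, X w →ₗ[K] X w)} := by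
      intro f hf
      obtain ⟨c, hc⟩ := hb f (by
        intro e x
        have := LinearMap.congr_fun (congrFun (LinearMap.mem_ker.1 hf) e) x
        simpa [QDelta, sub_eq_zero] using this)
      rw [Submodule.mem_span_singleton]
      refine ⟨c, ?_⟩
      funext w; ext x; simp [hc]
    calc _ ≤ _ := Submodule.finrank_mono hle
      _ ≤ 1 := by
        refine (finrank_span_le_card _).trans ?_
        simp
  omega

theorem finrank_QDelta_cod (φ : ∀ e, X (src e) →ₗ[K] X (tgt e)) :
    Module.finrank K (∀ e, X (src e) →ₗ[K] X (tgt e)) =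
      ∑ e, Module.finrank K (X (src e)) * Module.finrank K (X (tgt e)) := by
  rw [Module.finrank_pi_fintype]
  exact Finset.sum_congr rfl fun w _ => by rw [Module.finrank_linearMap]

theorem brick_q_le (φ : ∀ e, X (src e) →ₗ[K] X (tgt e)) (hb : QBrick φ) :
    ∑ w, Module.finrank K (X w) ^ 2 ≤
      1 + ∑ e, Module.finrank K (X (src e)) * Module.finrank K (X (tgt e)) := by
  have h1 := brick_rank φ hb
  have h2 := Submodule.finrank_le (LinearMap.range (QDelta φ))
  rw [finrank_QDelta_cod φ] at h2
  omega

theorem brick_surj (φ : ∀ e, X (src e) →ₗ[K] X (tgt e)) (hb : QBrick φ)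
    (hpos : ∀ d : W → ℕ, d ≠ 0 → ∑ e, d (src e) * d (tgt e) < ∑ w, d w ^ 2)
    (hne : ∃ w, ∃ x : X w, x ≠ 0) :
    Function.Surjective (QDelta φ) := by
  have h1 := brick_rank φ hb
  have h3 := hpos (fun w => Module.finrank K (X w)) (by
    obtain ⟨w, x, hx⟩ := hne
    intro h0
    have := congrFun h0 w
    simp only [Pi.zero_apply] at this
    rw [Module.finrank_zero_iff] at this
    exact hx (Subsingleton.elim _ _))
  have h2 := Submodule.finrank_le (LinearMap.range (QDelta φ))
  have h4 := finrank_QDelta_cod φ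
  rw [← LinearMap.range_eq_top]
  apply Submodule.eq_top_of_finrank_eq
  omega
end QR


theorem exists_min_nat {α : Type} (P : α → Prop) (m : α → ℕ) (h : ∃ a, P a) :
    ∃ a, P a ∧ ∀ b, P b → m a ≤ m b := by
  classical
  have h' : ∃ n, ∃ a, P a ∧ m a = n := by obtain ⟨a, ha⟩ := h; exact ⟨_, a, ha, rfl⟩
  obtain ⟨a, ha, hm⟩ := Nat.find_spec h'
  refine ⟨a, ha, fun b hb => ?_⟩
  rw [hm]; exact Nat.find_min' h' ⟨b, hb, rfl⟩

theorem exists_theta {K W A : Type} [Field K] [IsAlgClosed K] [Fintype W]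
    {src tgt : A → W} {X : W → Type}
    [∀ w, AddCommGroup (X w)] [∀ w, Module K (X w)] [∀ w, Module.Finite K (X w)]
    (φ : ∀ e, X (src e) →ₗ[K] X (tgt e)) (hI : QIndec φ) (hb : ¬ QBrick φ) :
    ∃ θ : ∀ w, X w →ₗ[K] X w, QEnd φ θ ∧ (∃ w x, θ w x ≠ 0) ∧ ∀ w x, θ w (θ w x) = 0 := by
  have hnt : Nontrivial (QAlg φ) := by
    refine ⟨0, 1, fun h => ?_⟩
    obtain ⟨w, x, hx⟩ := hI.1
    have := congrArg Subtype.val h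
    exact hx (LinearMap.congr_fun (congrFun this w) x).symm
  have hid : ∀ e : QAlg φ, e * e = e → e = 0 ∨ e = 1 := by
    intro e he
    rcases hI.2 e.1 e.2 (fun w x => by
      have := congrArg Subtype.val he
      exact LinearMap.congr_fun (congrFun this w) x) with h | h
    · left; apply Subtype.ext; funext w; ext x; exact h w x
    · right; apply Subtype.ext; funext w; ext x; exact h w x
  unfold QBrick at hb
  push Not at hb
  obtain ⟨f, hf, hfc⟩ := hb
  let a : QAlg φ := ⟨f, hf⟩
  have hfin : Module.Finite K (QAlg φ) :=
    inferInstanceAs (Module.Finite K (Subalgebra.toSubmodule (QAlg φ)))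
  obtain ⟨c, hc⟩ := spectrum.nonempty_of_isAlgClosed_of_finiteDimensional K a
  rw [spectrum.mem_iff] at hc
  have hnil := (unit_or_nilpotent (K := K) hid (algebraMap K (QAlg φ) c - a)).resolve_left hc
  set b := algebraMap K (QAlg φ) c - a with hb
  have hb0 : b ≠ 0 := by
    intro h0
    obtain ⟨w, x, hx⟩ := hfc c
    apply hx
    have := congrArg Subtype.val (sub_eq_zero.1 h0)
    exact (LinearMap.congr_fun (congrFun this w) x).symm
  have h1 := pow_nilpotencyClass hnil
  have h2 := pow_pred_nilpotencyClass hnil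
  set k := nilpotencyClass b
  have hk : 2 ≤ k := by
    by_contra hk
    have : k = 0 ∨ k = 1 := by omega
    rcases this with h | h
    · rw [h] at h1; simp at h1
    · rw [h] at h1; simp at h1; exact hb0 h1
  refine ⟨(b ^ (k-1)).1, (b ^ (k-1)).2, ?_, ?_⟩
  · by_contra hcon
    push Not at hcon
    apply h2
    apply Subtype.ext; funext w; ext x; exact hcon w x
  · have h3 : b ^ (k-1) * b ^ (k-1) = 0 := by
      rw [← pow_add, show k - 1 + (k-1) = k + (k-2) by omega, pow_add, h1, zero_mul]
    intro w x
    have := congrArg Subtype.val h3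
    exact LinearMap.congr_fun (congrFun this w) x

theorem indec_brick {K W A : Type} [Field K] [IsAlgClosed K] [Fintype W] [Fintype A]
    {src tgt : A → W}
    (hpos : ∀ d : W → ℕ, d ≠ 0 → ∑ e, d (src e) * d (tgt e) < ∑ w, d w ^ 2) :
    ∀ (n : ℕ) (X : W → Type)
    [∀ w, AddCommGroup (X w)] [∀ w, Module K (X w)] [∀ w, Module.Finite K (X w)]
    (φ : ∀ e, X (src e) →ₗ[K] X (tgt e)), QIndec φ → ∑ w, Module.finrank K (X w) = n →
      QBrick φ := by
  intro n
  induction n using Nat.strong_induction_on with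
  | _ n ih =>
  intro X _ _ _ φ hI hn
  by_contra hb
  obtain ⟨θ, ⟨hθe, hθ0, hθ2⟩, hθm⟩ := exists_min_nat
    (fun θ : ∀ w, X w →ₗ[K] X w => QEnd φ θ ∧ (∃ w x, θ w x ≠ 0) ∧ ∀ w x, θ w (θ w x) = 0)
    (fun θ => ∑ w, Module.finrank K (LinearMap.range (θ w))) (exists_theta φ hI hb)
  obtain ⟨p, ⟨hp1, hp2, hp3, hp4⟩, hpm⟩ := exists_min_nat
    (fun p : ∀ w, X w →ₗ[K] X w => (∀ w x, θ w (p w x) = 0) ∧ (∀ w x, p w (p w x) = p w x) ∧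
      (∀ e x, θ (src e) x = 0 → φ e (p _ x) = p _ (φ e x)) ∧ ∃ w x, p w (θ w x) ≠ 0)
    (fun p => ∑ w, Module.finrank K (LinearMap.range (p w))) (by
      have : ∀ w, ∃ q : X w →ₗ[K] LinearMap.ker (θ w),
          q ∘ₗ (LinearMap.ker (θ w)).subtype = LinearMap.id := fun w =>
        LinearMap.exists_leftInverse_of_injective _ (Submodule.ker_subtype _)
      choose q hq using this
      have hq' : ∀ w x, θ w x = 0 → ((q w x : LinearMap.ker (θ w)) : X w) = x := by
        intro w x hx
        have := LinearMap.congr_fun (hq w) ⟨x, hx⟩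
        simp only [LinearMap.comp_apply, Submodule.subtype_apply, LinearMap.id_apply] at this
        rw [this]
      refine ⟨fun w => (LinearMap.ker (θ w)).subtype ∘ₗ q w, fun w x => (q w x).2, ?_, ?_, ?_⟩
      · intro w x
        exact hq' w _ (q w x).2
      · intro e x hx
        simp only [LinearMap.comp_apply, Submodule.subtype_apply]
        rw [hq' _ x hx, hq' _ _ (by rw [← hθe, hx, map_zero])]
      · obtain ⟨w, x, hx⟩ := hθ0
        refine ⟨w, x, ?_⟩
        simp only [LinearMap.comp_apply, Submodule.subtype_apply]
        rw [hq' _ _ (hθ2 w x)]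
        exact hx)
  -- equality of ranks from minimality
  have sum_eq : ∀ (a b : W → ℕ), (∀ w, a w ≤ b w) → ∑ w, b w ≤ ∑ w, a w → ∀ w, a w = b w := by
    intro a b hab hs w
    have := (Finset.sum_eq_sum_iff_of_le (fun i (_ : i ∈ Finset.univ) => hab i)).1
      (le_antisymm (Finset.sum_le_sum fun i _ => hab i) hs)
    exact this w (Finset.mem_univ w)
  -- the subrepresentation `C`
  let C : ∀ w, Submodule K (X w) := fun w => LinearMap.range (p w)
  have hC : ∀ w (x : X w), x ∈ C w → p w x = x := by
    rintro w _ ⟨y, rfl⟩; exact hp2 w y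
  have hCθ : ∀ w (x : X w), x ∈ C w → θ w x = 0 := by
    rintro w _ ⟨y, rfl⟩; exact hp1 w y
  have hCφ : ∀ e (x : X (src e)), x ∈ C (src e) → φ e x ∈ C (tgt e) := by
    intro e x hx
    have := hp3 e x (hCθ _ _ hx)
    rw [hC _ _ hx] at this
    rw [this]; exact ⟨_, rfl⟩
  let φC : ∀ e, C (src e) →ₗ[K] C (tgt e) := fun e => (φ e).restrict (hCφ e)
  let pC : ∀ w, X w →ₗ[K] C w := fun w => (p w).rangeRestrict
  have hpC : ∀ w x, ((pC w x : C w) : X w) = p w x := fun w x => rfl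
  have hpC' : ∀ w (c : C w), pC w c = c := fun w c => Subtype.ext (hC w c c.2)
  have hCne : ∃ w, ∃ x : C w, x ≠ 0 := by
    obtain ⟨w, x, hx⟩ := hp4
    refine ⟨w, pC w (θ w x), fun h => hx ?_⟩
    rw [← hpC, h]; rfl
  -- key minimality step
  have hmin : ∀ f : ∀ w, C w →ₗ[K] C w, QEnd (X := fun w => C w) φC f → (∀ w x, f w (f w x) = f w x) →
      (∃ w x, f w (pC w (θ w x)) ≠ 0) → ∀ w x, f w x = x := by
    intro f hf hff hfne
    let p' : ∀ w, X w →ₗ[K] X w := fun w => (C w).subtype ∘ₗ f w ∘ₗ pC w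
    have hle : ∀ w, LinearMap.range (p' w) ≤ LinearMap.range (p w) := by
      rintro w _ ⟨y, rfl⟩; exact (f w (pC w y)).2
    have h := hpm p' ⟨fun w x => hCθ _ _ (f w (pC w x)).2, ?_, ?_, ?_⟩
    · have := sum_eq _ _ (fun w => Submodule.finrank_mono (hle w)) h
      intro w x
      have hr := Submodule.eq_of_le_of_finrank_eq (hle w) (this w)
      have hx : (x : X w) ∈ LinearMap.range (p' w) := by rw [hr]; exact x.2
      obtain ⟨y, hy⟩ := hx
      have : x = f w (pC w y) := Subtype.ext hy.symm
      rw [this, hff]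
    · intro w x
      simp only [p', LinearMap.comp_apply, Submodule.subtype_apply]
      rw [hpC', hff]
    · intro e x hx
      simp only [p', LinearMap.comp_apply, Submodule.subtype_apply]
      have h1 := congrArg Subtype.val (hf e (pC _ x))
      have h2 : φC e (pC _ x) = pC _ (φ e x) := Subtype.ext (hp3 e x hx)
      rw [h2] at h1
      exact h1
    · obtain ⟨w, x, hx⟩ := hfne
      exact ⟨w, x, fun h0 => hx (Subtype.ext h0)⟩
  have hCI : QIndec (X := fun w => C w) φC := by
    refine ⟨hCne, fun f hf hff => ?_⟩
    by_cases hfne : ∃ w x, f w (pC w (θ w x)) ≠ 0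
    · right; exact hmin f hf hff hfne
    · left
      push Not at hfne
      have h := hmin (fun w => LinearMap.id - f w) ?_ ?_ ?_
      · intro w x
        have := h w x
        simpa using this
      · intro e x
        have := hf e x
        simp [this]
      · intro w x
        simp [hff]
      · obtain ⟨w, x, hx⟩ := hp4
        refine ⟨w, x, fun h0 => hx ?_⟩
        rw [← hpC]
        simp only [LinearMap.sub_apply, LinearMap.id_apply, hfne, sub_zero] at h0
        rw [h0]; rfl
  have hlt : ∑ w, Module.finrank K (C w) < n := by
    rw [← hn]
    obtain ⟨w, x, hx⟩ := hθ0
    refine Finset.sum_lt_sum (fun w _ => Submodule.finrank_le _) ⟨w, Finset.mem_univ w, ?_⟩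
    apply Submodule.finrank_lt
    intro htop
    exact hx (hCθ w x (by rw [htop]; trivial))
  have hCb : QBrick (X := fun w => C w) φC := ih _ hlt (fun w => C w) φC hCI rfl
  have hsurj := brick_surj (X := fun w => C w) φC hCb hpos hCne
  -- kernel of pθ
  have hpθe : QEnd φ (fun w => p w ∘ₗ θ w) := by
    intro e x
    simp only [LinearMap.comp_apply]
    rw [hp3 e _ (hθ2 _ _), hθe]
  have hker : ∀ w x, p w (θ w x) = 0 → θ w x = 0 := by
    have hfr : ∀ w, Module.finrank K (LinearMap.range (p w ∘ₗ θ w)) ≤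
        Module.finrank K (LinearMap.range (θ w)) := by
      intro w
      rw [LinearMap.range_comp]
      exact Submodule.finrank_map_le _ _
    have h := sum_eq _ _ hfr (hθm (fun w => p w ∘ₗ θ w) ⟨hpθe, hp4, fun w x => by
      simp only [LinearMap.comp_apply, hp1, map_zero]⟩)
    intro w x hx
    have h1 := LinearMap.finrank_range_add_finrank_ker (p w ∘ₗ θ w)
    have h2 := LinearMap.finrank_range_add_finrank_ker (θ w)
    have hle : LinearMap.ker (θ w) ≤ LinearMap.ker (p w ∘ₗ θ w) := LinearMap.ker_le_ker_comp _ _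
    have := h w
    have heq := Submodule.eq_of_le_of_finrank_eq hle (by omega)
    have hx' : x ∈ LinearMap.ker (p w ∘ₗ θ w) := hx
    rw [← heq] at hx'
    exact hx'
  -- factor the defect
  have hfac : ∀ e, ∃ ψ : C (src e) →ₗ[K] C (tgt e), ∀ x, ψ (pC _ (θ _ x)) =
      (φC e ∘ₗ pC _ - pC _ ∘ₗ φ e) x := by
    intro e
    apply factor_of_ker_le (pC (src e) ∘ₗ θ (src e)) (φC e ∘ₗ pC _ - pC _ ∘ₗ φ e)
    intro x hx
    have hx1 : θ _ x = 0 := hker _ x (congrArg Subtype.val hx)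
    rw [LinearMap.sub_apply, sub_eq_zero]
    exact Subtype.ext (hp3 e x hx1)
  choose ψ hψ using hfac
  obtain ⟨h, hh⟩ := hsurj ψ
  let rC : ∀ w, X w →ₗ[K] C w := fun w => pC w - h w ∘ₗ pC w ∘ₗ θ w
  let r : ∀ w, X w →ₗ[K] X w := fun w => (C w).subtype ∘ₗ rC w
  have hr : QEnd φ r := by
    intro e x
    have h1 := hψ e x
    rw [← hh] at h1
    have h2 : φC e (pC _ (θ _ x)) = pC _ (θ _ (φ e x)) := Subtype.ext (hpθe e x)
    simp only [QDelta, LinearMap.coe_mk, AddHom.coe_mk, LinearMap.sub_apply,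
      LinearMap.comp_apply, h2] at h1
    have h3 : φC e (rC _ x) = rC _ (φ e x) := by
      simp only [rC, LinearMap.sub_apply, LinearMap.comp_apply, map_sub]
      rw [sub_eq_sub_iff_sub_eq_sub, ← h1]
    exact congrArg Subtype.val h3
  have hrC : ∀ w (c : X w), c ∈ C w → r w c = c := by
    intro w c hc
    simp only [r, rC, LinearMap.comp_apply, LinearMap.sub_apply, hCθ w c hc, map_zero, sub_zero]
    exact hC w c hc
  have hrm : ∀ w x, r w x ∈ C w := fun w x => (rC w x).2
  rcases hI.2 r hr (fun w x => hrC w _ (hrm w x)) with h0 | h0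
  · obtain ⟨w, x, hx⟩ := hCne
    apply hx
    apply Subtype.ext
    rw [← hrC w x x.2, h0]; rfl
  · obtain ⟨w, x, hx⟩ := hθ0
    apply hx
    apply hCθ
    rw [← h0 w x]; exact hrm w x

theorem indec_q_le {K W A : Type} [Field K] [IsAlgClosed K] [Fintype W] [Fintype A]
    {src tgt : A → W}
    (hpos : ∀ d : W → ℕ, d ≠ 0 → ∑ e, d (src e) * d (tgt e) < ∑ w, d w ^ 2)
    {X : W → Type}
    [∀ w, AddCommGroup (X w)] [∀ w, Module K (X w)] [∀ w, Module.Finite K (X w)]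
    (φ : ∀ e, X (src e) →ₗ[K] X (tgt e)) (hI : QIndec φ) :
    ∑ w, Module.finrank K (X w) ^ 2 ≤
      1 + ∑ e, Module.finrank K (X (src e)) * Module.finrank K (X (tgt e)) :=
  brick_q_le φ (indec_brick hpos _ X φ hI rfl)

set_option linter.unusedSectionVars false

structure DM (K : Type) [Field K] {V A : Type} [Fintype V] (s t : A → V) where
  carrier : Type
  [acg : AddCommGroup carrier]
  [mod : Module K carrier]
  [fin : Module.Finite K carrier]
  p : V → carrier →ₗ[K] carrier
  u : A → carrier →ₗ[K] carrier
  pp : ∀ v m, p v (p v m) = p v m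
  pp0 : ∀ v w m, v ≠ w → p v (p w m) = 0
  psum : ∀ m, ∑ v, p v m = m
  pu : ∀ e m, p (s e) (u e m) = u e m
  up : ∀ e m, u e (p (t e) m) = u e m
  uu : ∀ e f m, u e (u f m) = 0

attribute [instance] DM.acg DM.mod DM.fin

section
variable {K : Type} [Field K] {V A : Type} [Fintype V] [Fintype A] {s t : A → V}

theorem DM.pu0 (M : DM K s t) (v e m) (h : v ≠ s e) : M.p v (M.u e m) = 0 := by
  rw [← M.pu e m]; exact M.pp0 _ _ _ h

theorem DM.up0 (M : DM K s t) (v e m) (h : v ≠ t e) : M.u e (M.p v m) = 0 := by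
  rw [← M.up e, M.pp0 _ _ _ h.symm, map_zero]

def DHomP (M N : DM K s t) (f : M.carrier →ₗ[K] N.carrier) : Prop :=
  (∀ v m, f (M.p v m) = N.p v (f m)) ∧ (∀ e m, f (M.u e m) = N.u e (f m))

def DIso (M N : DM K s t) : Prop :=
  ∃ f : M.carrier →ₗ[K] N.carrier, Function.Bijective f ∧ DHomP M N f

theorem DIso.refl (M : DM K s t) : DIso M M :=
  ⟨LinearMap.id, Function.bijective_id, fun _ _ => rfl, fun _ _ => rfl⟩

theorem DIso.trans {M N P : DM K s t} (h : DIso M N) (h' : DIso N P) : DIso M P := by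
  obtain ⟨f, hf, hf1, hf2⟩ := h
  obtain ⟨f', hf', hf1', hf2'⟩ := h'
  refine ⟨f' ∘ₗ f, hf'.comp hf, fun v m => ?_, fun e m => ?_⟩
  · simp [hf1, hf1']
  · simp [hf2, hf2']

theorem DIso.symm {M N : DM K s t} (h : DIso M N) : DIso N M := by
  obtain ⟨f, hf, hf1, hf2⟩ := h
  let E := LinearEquiv.ofBijective f hf
  have hE : ∀ m, E m = f m := fun m => rfl
  refine ⟨E.symm.toLinearMap, E.symm.bijective, fun v m => ?_, fun e m => ?_⟩
  · apply E.injective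
    simp only [LinearEquiv.coe_coe, LinearEquiv.apply_symm_apply]
    rw [hE, hf1, ← hE, LinearEquiv.apply_symm_apply]
  · apply E.injective
    simp only [LinearEquiv.coe_coe, LinearEquiv.apply_symm_apply]
    rw [hE, hf2, ← hE, LinearEquiv.apply_symm_apply]

def DIndec (M : DM K s t) : Prop :=
  (∃ m : M.carrier, m ≠ 0) ∧ ∀ f, DHomP M M f → (∀ m, f (f m) = f m) →
    (∀ m, f m = 0) ∨ (∀ m, f m = m)

variable {H : Type} [AddCommGroup H] [Module K H] [Coalgebra K H] {g : V → H} {x : A → H}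

theorem counit_skew (hg : ∀ v, IsGrouplike K H (g v))
    (hx : ∀ e, x e ∈ skewPrim K H (g (s e)) (g (t e))) (e : A) :
    Coalgebra.counit (R := K) (x e) = 0 := by
  have h := Coalgebra.rTensor_counit_comul (R := K) (x e)
  rw [(mem_skewPrim K H).1 (hx e)] at h
  have h2 := congrArg (TensorProduct.lid K H) h
  simp only [map_add, LinearMap.rTensor_tmul, (hg (s e)).1, TensorProduct.lid_tmul, one_smul] at h2
  have h3 := congrArg (Coalgebra.counit (R := K)) (add_eq_left.1 h2)
  simpa [(hg (t e)).1] using h3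

noncomputable def rhoDM (M : DM K s t) (g : V → H) (x : A → H) :
    M.carrier →ₗ[K] M.carrier ⊗[K] H :=
  ∑ v, (TensorProduct.mk K M.carrier H).flip (g v) ∘ₗ M.p v +
  ∑ e, (TensorProduct.mk K M.carrier H).flip (x e) ∘ₗ M.u e

theorem rhoDM_apply (M : DM K s t) (g : V → H) (x : A → H) (m : M.carrier) :
    rhoDM M g x m = ∑ v, M.p v m ⊗ₜ[K] g v + ∑ e, M.u e m ⊗ₜ[K] x e := by
  simp [rhoDM]

theorem rhoDM_p (M : DM K s t) (g : V → H) (x : A → H) (v) (m : M.carrier) :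
    rhoDM M g x (M.p v m) = M.p v m ⊗ₜ[K] g v + ∑ e, M.u e (M.p v m) ⊗ₜ[K] x e := by
  rw [rhoDM_apply, Finset.sum_eq_single v, M.pp]
  · intro w _ hw; rw [M.pp0 _ _ _ hw, TensorProduct.zero_tmul]
  · simp

theorem rhoDM_u (M : DM K s t) (g : V → H) (x : A → H) (e) (m : M.carrier) :
    rhoDM M g x (M.u e m) = M.u e m ⊗ₜ[K] g (s e) := by
  rw [rhoDM_apply, Finset.sum_eq_single (s e), M.pu]
  · simp [M.uu]
  · intro w _ hw; rw [M.pu0 _ _ _ hw, TensorProduct.zero_tmul]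
  · simp

noncomputable def DM.toComod (M : DM K s t) (hg : ∀ v, IsGrouplike K H (g v))
    (hx : ∀ e, x e ∈ skewPrim K H (g (s e)) (g (t e))) : Comod K H where
  carrier := M.carrier
  ρ := rhoDM M g x
  counit_comp := by
    intro m
    rw [rhoDM_apply]
    simp only [map_add, map_sum, LinearMap.lTensor_tmul, (hg _).1, counit_skew hg hx,
      TensorProduct.rid_tmul, one_smul, zero_smul, Finset.sum_const_zero, add_zero, M.psum]
  coassoc := by
    intro m
    rw [rhoDM_apply]
    simp only [map_add, map_sum, LinearMap.lTensor_tmul, LinearMap.rTensor_tmul, (hg _).2,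
      (mem_skewPrim K H).1 (hx _), rhoDM_p, rhoDM_u, TensorProduct.add_tmul, TensorProduct.tmul_add,
      TensorProduct.assoc_tmul, TensorProduct.sum_tmul, Finset.sum_add_distrib]
    rw [add_assoc, add_comm (∑ e, (M.u e) m ⊗ₜ[K] (g (s e) ⊗ₜ[K] x e))]
    congr 2
    rw [Finset.sum_comm]
    refine Finset.sum_congr rfl fun e _ => ?_
    rw [Finset.sum_eq_single (t e), M.up]
    · intro w _ hw; rw [M.up0 _ _ _ hw, TensorProduct.zero_tmul]
    · simp

noncomputable def evT (M : Type) [AddCommGroup M] [Module K M] (ζ : H →ₗ[K] K) :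
    M ⊗[K] H →ₗ[K] M := (TensorProduct.rid K M).toLinearMap ∘ₗ LinearMap.lTensor M ζ

theorem evT_tmul (M : Type) [AddCommGroup M] [Module K M] (ζ : H →ₗ[K] K) (m : M) (h : H) :
    evT M ζ (m ⊗ₜ[K] h) = ζ h • m := by simp [evT]

theorem exists_dual (hli : LinearIndependent K (Sum.elim g x)) :
    ∃ (γ : V → H →ₗ[K] K) (ξ : A → H →ₗ[K] K),
      (∀ v, γ v (g v) = 1) ∧ (∀ v w, v ≠ w → γ v (g w) = 0) ∧ (∀ v e, γ v (x e) = 0) ∧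
      (∀ e, ξ e (x e) = 1) ∧ (∀ e f, e ≠ f → ξ e (x f) = 0) ∧ (∀ e v, ξ e (g v) = 0) := by
  classical
  have : ∀ i : V ⊕ A, ∃ ζ : H →ₗ[K] K, ∀ j, ζ (Sum.elim g x j) = if j = i then 1 else 0 := by
    intro i
    obtain ⟨ζ, hζ⟩ := LinearMap.exists_extend (Finsupp.lapply i ∘ₗ hli.repr)
    refine ⟨ζ, fun j => ?_⟩
    have := LinearMap.congr_fun hζ ⟨Sum.elim g x j, Submodule.subset_span ⟨j, rfl⟩⟩
    simp only [LinearMap.comp_apply, Submodule.subtype_apply] at this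
    rw [this]
    rw [hli.repr_eq_single j _ rfl]
    simp [Finsupp.single_apply]
  choose ζ hζ using this
  refine ⟨fun v => ζ (.inl v), fun e => ζ (.inr e), ?_, ?_, ?_, ?_, ?_, ?_⟩
  · intro v; simpa using hζ (.inl v) (.inl v)
  · intro v w h; simpa [h.symm] using hζ (.inl v) (.inl w)
  · intro v e; simpa using hζ (.inl v) (.inr e)
  · intro v; simpa using hζ (.inr v) (.inr v)
  · intro v w h; simpa [h.symm] using hζ (.inr v) (.inr w)
  · intro e v; simpa using hζ (.inr e) (.inl v)

theorem coeff_ext (hli : LinearIndependent K (Sum.elim g x))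
    {M : Type} [AddCommGroup M] [Module K M] {a a' : V → M} {b b' : A → M}
    (h : ∑ v, a v ⊗ₜ[K] g v + ∑ e, b e ⊗ₜ[K] x e = ∑ v, a' v ⊗ₜ[K] g v + ∑ e, b' e ⊗ₜ[K] x e) :
    a = a' ∧ b = b' := by
  obtain ⟨γ, ξ, h1, h2, h3, h4, h5, h6⟩ := exists_dual hli
  constructor
  · funext v
    have := congrArg (evT M (γ v)) h
    simp only [map_add, map_sum, evT_tmul, h3, zero_smul, Finset.sum_const_zero, add_zero] at this
    rw [Finset.sum_eq_single v (fun w _ hw => by rw [h2 v w hw.symm, zero_smul]) (by simp),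
      Finset.sum_eq_single v (fun w _ hw => by rw [h2 v w hw.symm, zero_smul]) (by simp), h1] at this
    simpa using this
  · funext v
    have := congrArg (evT M (ξ v)) h
    simp only [map_add, map_sum, evT_tmul, h6, zero_smul, Finset.sum_const_zero, zero_add] at this
    rw [Finset.sum_eq_single v (fun w _ hw => by rw [h5 v w hw.symm, zero_smul]) (by simp),
      Finset.sum_eq_single v (fun w _ hw => by rw [h5 v w hw.symm, zero_smul]) (by simp), h4] at this
    simpa using this

theorem hom_iff (M N : DM K s t) (hg : ∀ v, IsGrouplike K H (g v))
    (hx : ∀ e, x e ∈ skewPrim K H (g (s e)) (g (t e)))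
    (hli : LinearIndependent K (Sum.elim g x)) (f : M.carrier →ₗ[K] N.carrier) :
    (∀ m : M.carrier, (N.toComod hg hx).ρ (f m) =
      (LinearMap.rTensor H f) ((M.toComod hg hx).ρ m)) ↔ DHomP M N f := by
  have key : ∀ m : M.carrier, ((N.toComod hg hx).ρ (f m) =
      (LinearMap.rTensor H f) ((M.toComod hg hx).ρ m)) ↔
      ∑ v, N.p v (f m) ⊗ₜ[K] g v + ∑ e, N.u e (f m) ⊗ₜ[K] x e =
      ∑ v, f (M.p v m) ⊗ₜ[K] g v + ∑ e, f (M.u e m) ⊗ₜ[K] x e := by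
    intro m
    change rhoDM N g x (f m) = (LinearMap.rTensor H f) (rhoDM M g x m) ↔ _
    rw [rhoDM_apply, rhoDM_apply]
    simp only [map_add, map_sum, LinearMap.rTensor_tmul]
  constructor
  · intro h
    refine ⟨fun v m => ?_, fun e m => ?_⟩
    · exact (congrFun (coeff_ext hli ((key m).1 (h m))).1 v).symm
    · exact (congrFun (coeff_ext hli ((key m).1 (h m))).2 e).symm
  · intro h m
    rw [key]
    simp only [h.1, h.2]

theorem iso_iff (M N : DM K s t) (hg : ∀ v, IsGrouplike K H (g v))
    (hx : ∀ e, x e ∈ skewPrim K H (g (s e)) (g (t e)))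
    (hli : LinearIndependent K (Sum.elim g x)) :
    ComodIso K H (M.toComod hg hx) (N.toComod hg hx) ↔ DIso M N := by
  constructor
  · rintro ⟨⟨f, hf⟩, hb⟩
    exact ⟨f, hb, (hom_iff M N hg hx hli f).1 hf⟩
  · rintro ⟨f, hb, hf⟩
    exact ⟨⟨f, (hom_iff M N hg hx hli f).2 hf⟩, hb⟩

theorem indec_iff (M : DM K s t) (hg : ∀ v, IsGrouplike K H (g v))
    (hx : ∀ e, x e ∈ skewPrim K H (g (s e)) (g (t e)))
    (hli : LinearIndependent K (Sum.elim g x)) :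
    (M.toComod hg hx).Indec K H ↔ DIndec M := by
  refine and_congr Iff.rfl ⟨fun h f hf hff => ?_, fun h f hff => ?_⟩
  · rcases h ⟨f, (hom_iff M M hg hx hli f).2 hf⟩ (LinearMap.ext hff) with h | h
    · left; exact fun m => LinearMap.congr_fun h m
    · right; exact fun m => LinearMap.congr_fun h m
  · rcases h f.toLin ((hom_iff M M hg hx hli f.toLin).1 f.compat)
      (fun m => LinearMap.congr_fun hff m) with h | h
    · left; exact LinearMap.ext h
    · right; exact LinearMap.ext h

theorem span_expand (γ : V → H →ₗ[K] K) (ξ : A → H →ₗ[K] K)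
    (h1 : ∀ v, γ v (g v) = 1) (h2 : ∀ v w, v ≠ w → γ v (g w) = 0) (h3 : ∀ v e, γ v (x e) = 0)
    (h4 : ∀ e, ξ e (x e) = 1) (h5 : ∀ e f, e ≠ f → ξ e (x f) = 0) (h6 : ∀ e v, ξ e (g v) = 0)
    (h : H) (hh : h ∈ Submodule.span K (Set.range g ∪ Set.range x)) :
    h = ∑ v, γ v h • g v + ∑ e, ξ e h • x e := by
  induction hh using Submodule.span_induction with
  | mem y hy =>
    rcases hy with ⟨v, rfl⟩ | ⟨e, rfl⟩
    · rw [Finset.sum_eq_single v (fun w _ hw => by rw [h2 w v hw, zero_smul]) (by simp), h1]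
      simp [h6]
    · rw [Finset.sum_eq_single (s := Finset.univ) (f := fun e' => ξ e' (x e) • x e') e
        (fun w _ hw => by rw [h5 w e hw, zero_smul]) (by simp), h4]
      simp [h3]
  | zero => simp
  | add a b _ _ ha hb =>
    simp only [map_add, add_smul, Finset.sum_add_distrib]
    nth_rewrite 1 [ha, hb]
    abel
  | smul c a _ ha =>
    simp only [map_smul, smul_assoc, ← Finset.smul_sum, ← smul_add]
    rw [← ha]

theorem exists_DM (M : Comod K H) (hg : ∀ v, IsGrouplike K H (g v))
    (hx : ∀ e, x e ∈ skewPrim K H (g (s e)) (g (t e)))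
    (hli : LinearIndependent K (Sum.elim g x)) (hfin : Module.Finite K M.carrier)
    (hM : CoactsThrough K H M (Submodule.span K (Set.range g ∪ Set.range x))) :
    ∃ N : DM K s t, N.toComod hg hx = M := by
  obtain ⟨γ, ξ, h1, h2, h3, h4, h5, h6⟩ := exists_dual hli
  obtain ⟨X, ρ, hcu, hca⟩ := M
  rename_i iacg imod
  simp only at hfin hcu hca
  simp only [CoactsThrough] at hM
  have hρ : ∀ m, ρ m = ∑ v, evT X (γ v) (ρ m) ⊗ₜ[K] g v + ∑ e, evT X (ξ e) (ρ m) ⊗ₜ[K] x e := by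
    intro m
    obtain ⟨z, hz⟩ := hM m
    rw [← hz]
    clear hz
    induction z using TensorProduct.induction_on with
    | zero => simp
    | tmul y d =>
      simp only [LinearMap.lTensor_tmul, Submodule.subtype_apply, evT_tmul]
      conv_lhs => rw [span_expand γ ξ h1 h2 h3 h4 h5 h6 d d.2]
      simp only [TensorProduct.tmul_add, TensorProduct.tmul_sum, TensorProduct.tmul_smul,
        TensorProduct.smul_tmul']
    | add a b ha hb =>
      simp only [map_add, TensorProduct.add_tmul, Finset.sum_add_distrib]
      nth_rewrite 1 [ha, hb]
      abel
  let p : V → X →ₗ[K] X := fun v => evT X (γ v) ∘ₗ ρ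
  let u : A → X →ₗ[K] X := fun e => evT X (ξ e) ∘ₗ ρ
  have hρ' : ∀ m, ρ m = ∑ v, p v m ⊗ₜ[K] g v + ∑ e, u e m ⊗ₜ[K] x e := hρ
  -- iterated functional
  have key : ∀ (α β : H →ₗ[K] K) (m : X), evT X α (ρ (evT X β (ρ m))) =
      ∑ v, (α (g v) * β (g v)) • p v m +
      ∑ e, (α (g (s e)) * β (x e) + α (x e) * β (g (t e))) • u e m := by
    intro α β m
    let L : X ⊗[K] (H ⊗[K] H) →ₗ[K] X :=
      evT X α ∘ₗ evT (X ⊗[K] H) β ∘ₗ (TensorProduct.assoc K X H H).symm.toLinearMap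
    have hL : ∀ (a : X) (h h' : H), L (a ⊗ₜ (h ⊗ₜ h')) = (α h * β h') • a := by
      intro a h h'
      simp [L, evT_tmul, smul_smul, mul_comm]
    have hL2 : ∀ z : X ⊗[K] H, L ((TensorProduct.assoc K X H H) ((LinearMap.rTensor H ρ) z)) =
        evT X α (ρ (evT X β z)) := by
      intro z
      induction z using TensorProduct.induction_on with
      | zero => simp
      | tmul y d => simp [L, evT_tmul]
      | add a b ha hb => simp only [map_add, ha, hb]
    rw [← hL2, ← hca, hρ']
    simp only [map_add, map_sum, LinearMap.lTensor_tmul, (hg _).2, (mem_skewPrim K H).1 (hx _),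
      TensorProduct.tmul_add, hL, ← add_smul]
  refine ⟨@DM.mk K _ V A _ s t X iacg imod hfin p u ?_ ?_ ?_ ?_ ?_ ?_, ?_⟩
  · intro v m
    simp only [p, LinearMap.comp_apply]
    rw [key]
    rw [Finset.sum_eq_single v (fun w _ hw => by simp [h2 v w hw.symm]) (by simp)]
    simp [h1, h3, p]
  · intro v w m hvw
    simp only [p, LinearMap.comp_apply]
    rw [key, Finset.sum_eq_zero, Finset.sum_eq_zero, add_zero]
    · intro e _; simp [h3]
    · intro a _
      by_cases ha : v = a
      · rw [h2 w a (by rintro rfl; exact hvw ha)]; simp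
      · rw [h2 v a ha]; simp
  · intro m
    have h := hcu m
    rw [hρ' m] at h
    simpa only [map_add, map_sum, LinearMap.lTensor_tmul, (hg _).1, counit_skew hg hx,
      TensorProduct.rid_tmul, one_smul, zero_smul, Finset.sum_const_zero, add_zero] using h
  · intro e m
    simp only [p, u, LinearMap.comp_apply]
    rw [key, Finset.sum_eq_zero (fun v _ => by simp [h6]), Finset.sum_eq_single e
      (fun f _ hf => by simp [h5 e f hf.symm, h3]) (by simp)]
    simp [h1, h4, h3, u]
  · intro e m
    simp only [p, u, LinearMap.comp_apply]
    rw [key, Finset.sum_eq_zero (fun v _ => by simp [h6]), Finset.sum_eq_single e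
      (fun f _ hf => by simp [h5 e f hf.symm, h3]) (by simp)]
    simp [h1, h4, h3, u]
  · intro e f m
    simp only [u, LinearMap.comp_apply]
    rw [key]
    simp [h6]
  · simp only [DM.toComod]
    congr 1
    ext m
    rw [rhoDM_apply]
    exact (hρ' m).symm
end

set_option linter.unusedSectionVars false

section
variable {K : Type} [Field K] {V A : Type} [Fintype V] [Fintype A] {s t : A → V}

def vx {V : Type} : V ⊕ V → V := Sum.elim id id

open Classical in
@[reducible] noncomputable def ofQ (X : V ⊕ V → Type) [∀ w, AddCommGroup (X w)] [∀ w, Module K (X w)]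
    [∀ w, Module.Finite K (X w)] (φ : ∀ e, X (Sum.inr (t e)) →ₗ[K] X (Sum.inl (s e))) : DM K s t where
  carrier := ∀ w, X w
  p v := LinearMap.pi fun w => if vx w = v then LinearMap.proj w else 0
  u e := LinearMap.single K X (Sum.inl (s e)) ∘ₗ φ e ∘ₗ LinearMap.proj (Sum.inr (t e))
  pp := by
    intro v m; funext w
    by_cases h : vx w = v <;> simp [h]
  pp0 := by
    intro v v' m hv; funext w
    by_cases h : vx w = v
    · have h' : vx w ≠ v' := by rw [h]; exact hv
      simp [h, h', hv]
    · simp [h]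
  psum := by
    intro m; funext w
    rw [Finset.sum_apply, Finset.sum_eq_single (vx w)]
    · simp
    · intro b _ hb
      simp [hb.symm]
    · simp
  pu := by
    intro e m; funext w
    by_cases h : vx w = s e
    · simp [h]
    · have : w ≠ Sum.inl (s e) := by rintro rfl; exact h rfl
      simp [h, this]
  up := by
    intro e m
    simp [vx]
  uu := by
    intro e f m
    simp

theorem ofQ_p (X : V ⊕ V → Type) [∀ w, AddCommGroup (X w)] [∀ w, Module K (X w)]
    [∀ w, Module.Finite K (X w)] (φ : ∀ e, X (Sum.inr (t e)) →ₗ[K] X (Sum.inl (s e)))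
    (v : V) (m : ∀ w, X w) (w) (h : vx w = v) :
    ((ofQ X φ : DM K s t).p v m) w = m w := by
  simp [ofQ, h]

theorem ofQ_p0 (X : V ⊕ V → Type) [∀ w, AddCommGroup (X w)] [∀ w, Module K (X w)]
    [∀ w, Module.Finite K (X w)] (φ : ∀ e, X (Sum.inr (t e)) →ₗ[K] X (Sum.inl (s e)))
    (v : V) (m : ∀ w, X w) (w) (h : vx w ≠ v) :
    ((ofQ X φ : DM K s t).p v m) w = 0 := by
  simp [ofQ, h]

open Classical in
theorem ofQ_u (X : V ⊕ V → Type) [∀ w, AddCommGroup (X w)] [∀ w, Module K (X w)]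
    [∀ w, Module.Finite K (X w)] (φ : ∀ e, X (Sum.inr (t e)) →ₗ[K] X (Sum.inl (s e)))
    (e : A) (m : ∀ w, X w) :
    (ofQ X φ : DM K s t).u e m = 
      Pi.single (Sum.inl (s e)) (φ e (m (Sum.inr (t e)))) := by
  simp [ofQ]

theorem indec_of_ofQ (X : V ⊕ V → Type) [∀ w, AddCommGroup (X w)] [∀ w, Module K (X w)]
    [∀ w, Module.Finite K (X w)] (φ : ∀ e, X (Sum.inr (t e)) →ₗ[K] X (Sum.inl (s e)))
    (h : DIndec (ofQ X φ : DM K s t)) :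
    QIndec (src := fun e => Sum.inr (t e)) (tgt := fun e => Sum.inl (s e)) φ := by
  classical
  refine ⟨?_, fun f hf hff => ?_⟩
  · obtain ⟨m, hm⟩ := h.1
    obtain ⟨w, hw⟩ := Function.ne_iff.1 (show (m : ∀ w, X w) ≠ 0 from hm)
    exact ⟨w, _, hw⟩
  · let F : (∀ w, X w) →ₗ[K] (∀ w, X w) := LinearMap.pi fun w => f w ∘ₗ LinearMap.proj w
    have hF : ∀ m w, F m w = f w (m w) := fun m w => rfl
    have := h.2 F ⟨?_, ?_⟩ ?_
    · rcases this with h | h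
      · left; intro w x
        have := congrFun (h (Pi.single w x)) w
        rw [hF, Pi.single_eq_same] at this
        exact this
      · right; intro w x
        have := congrFun (h (Pi.single w x)) w
        rw [hF] at this
        simpa using this
    · intro v m
      funext w
      by_cases hw : vx w = v
      · exact (congrArg (f w) (ofQ_p X φ v m w hw)).trans (ofQ_p X φ v (F m) w hw).symm
      · exact (congrArg (f w) (ofQ_p0 X φ v m w hw)).trans
          ((map_zero _).trans (ofQ_p0 X φ v (F m) w hw).symm)
    · intro e m
      have h1 := ofQ_u (s := s) (t := t) X φ e m
      have h2 := ofQ_u (s := s) (t := t) X φ e (F m)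
      rw [h1, h2, hF, hf]
      funext w
      rw [hF]
      by_cases hw : w = Sum.inl (s e)
      · subst hw; simp
      · simp [hw]
    · intro m; funext w
      exact hff w (m w)

@[reducible] noncomputable def std (s t : A → V) (d : V ⊕ V → ℕ)
    (φ : ∀ e, Matrix (Fin (d (Sum.inl (s e)))) (Fin (d (Sum.inr (t e)))) K) : DM K s t :=
  ofQ (fun w => Fin (d w) → K) (fun e => Matrix.toLin' (φ e))

theorem std_iso (M : DM K s t) :
    ∃ (d : V ⊕ V → ℕ) (φ : ∀ e, Matrix (Fin (d (Sum.inl (s e)))) (Fin (d (Sum.inr (t e)))) K),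
      DIso (std s t d φ) M := by
  classical
  let Xs : V → Submodule K M.carrier := fun v => ⨆ e : {e // s e = v}, LinearMap.range (M.u e)
  have hXp : ∀ v m, m ∈ Xs v → M.p v m = m := by
    intro v m hm
    have : Xs v ≤ LinearMap.ker (M.p v - LinearMap.id) := by
      refine iSup_le fun e => ?_
      rintro _ ⟨y, rfl⟩
      obtain ⟨e, rfl⟩ := e
      simp [M.pu]
    have := this hm
    simpa [sub_eq_zero] using this
  have hXu : ∀ e v m, m ∈ Xs v → M.u e m = 0 := by
    intro e v m hm
    have : Xs v ≤ LinearMap.ker (M.u e) := by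
      refine iSup_le fun e => ?_
      rintro _ ⟨y, rfl⟩
      simp [M.uu]
    exact this hm
  have huX : ∀ e m, M.u e m ∈ Xs (s e) := by
    intro e m
    exact (le_iSup (fun e' : {e' // s e' = s e} => LinearMap.range (M.u e')) ⟨e, rfl⟩) ⟨m, rfl⟩
  have hXle : ∀ v, Xs v ≤ LinearMap.range (M.p v) := fun v m hm => ⟨m, hXp v m hm⟩
  have hY : ∀ v, ∃ Y : Submodule K M.carrier, Xs v ⊔ Y = LinearMap.range (M.p v) ∧
      Disjoint (Xs v) Y := by
    intro v
    obtain ⟨Y, hY⟩ := Submodule.exists_isCompl (Xs v)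
    refine ⟨Y ⊓ LinearMap.range (M.p v), ?_, hY.disjoint.mono_right inf_le_left⟩
    rw [← sup_inf_assoc_of_le _ (hXle v), hY.sup_eq_top, top_inf_eq]
  choose Ys hY1 hY2 using hY
  let N : V ⊕ V → Submodule K M.carrier := Sum.elim Xs Ys
  have hNp : ∀ w m, m ∈ N w → M.p (vx w) m = m := by
    rintro (v | v) m hm
    · exact hXp v m hm
    · have : m ∈ LinearMap.range (M.p v) := by
        rw [← hY1]; exact Submodule.mem_sup_right hm
      obtain ⟨y, rfl⟩ := this
      exact M.pp v y
  have hNp0 : ∀ w m v, m ∈ N w → v ≠ vx w → M.p v m = 0 := by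
    intro w m v hm hv
    rw [← hNp w m hm, M.pp0 _ _ _ hv]
  let d : V ⊕ V → ℕ := fun w => Module.finrank K (N w)
  let β : ∀ w, (Fin (d w) → K) ≃ₗ[K] N w := fun w => (Module.finBasis K (N w)).equivFun.symm
  let φ : ∀ e, Matrix (Fin (d (Sum.inl (s e)))) (Fin (d (Sum.inr (t e)))) K := fun e =>
    LinearMap.toMatrix' ((β (Sum.inl (s e))).symm.toLinearMap ∘ₗ
      ((M.u e).codRestrict (N (Sum.inl (s e))) (huX e)) ∘ₗ (N (Sum.inr (t e))).subtype ∘ₗ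
        (β (Sum.inr (t e))).toLinearMap)
  let f : (∀ w, Fin (d w) → K) →ₗ[K] M.carrier :=
    ∑ w, (N w).subtype ∘ₗ (β w).toLinearMap ∘ₗ LinearMap.proj w
  have hf : ∀ z, f z = ∑ w, (β w (z w) : M.carrier) := by
    intro z; simp [f]
  have hpf : ∀ v z, M.p v (f z) = (β (Sum.inl v) (z (Sum.inl v)) : M.carrier) +
      (β (Sum.inr v) (z (Sum.inr v)) : M.carrier) := by
    intro v z
    rw [hf, map_sum, Fintype.sum_sum_type]
    congr 1
    · rw [Finset.sum_eq_single v]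
      · exact hNp (Sum.inl v) _ (Subtype.prop _)
      · intro b _ hb
        exact hNp0 (Sum.inl b) _ v (Subtype.prop _) hb.symm
      · simp
    · rw [Finset.sum_eq_single v]
      · exact hNp (Sum.inr v) _ (Subtype.prop _)
      · intro b _ hb
        exact hNp0 (Sum.inr b) _ v (Subtype.prop _) hb.symm
      · simp
  refine ⟨d, φ, f, ⟨?_, ?_⟩, ?_, ?_⟩
  · refine (injective_iff_map_eq_zero f).2 fun z hz => ?_
    have h0 : ∀ v, β (Sum.inl v) (z (Sum.inl v)) = 0 ∧ β (Sum.inr v) (z (Sum.inr v)) = 0 := by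
      intro v
      have h := hpf v z
      rw [hz, map_zero] at h
      have h1 : (β (Sum.inl v) (z (Sum.inl v)) : M.carrier) = 0 := by
        apply Submodule.disjoint_def.1 (hY2 v) _ (Subtype.prop _)
        rw [eq_neg_of_add_eq_zero_left h.symm]
        exact neg_mem (Subtype.prop _)
      rw [h1, zero_add] at h
      exact ⟨Subtype.ext h1, Subtype.ext h.symm⟩
    funext w
    rcases w with v | v
    · exact (β (Sum.inl v)).map_eq_zero_iff.1 (h0 v).1
    · exact (β (Sum.inr v)).map_eq_zero_iff.1 (h0 v).2
  · intro m
    have : ∀ v, ∃ a : N (Sum.inl v), ∃ b : N (Sum.inr v), (a : M.carrier) + b = M.p v m := by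
      intro v
      have h : M.p v m ∈ Xs v ⊔ Ys v := by rw [hY1]; exact ⟨m, rfl⟩
      obtain ⟨a, ha, b, hb, hab⟩ := Submodule.mem_sup.1 h
      exact ⟨⟨a, ha⟩, ⟨b, hb⟩, hab⟩
    choose a b hab using this
    let z : ∀ w, Fin (d w) → K := fun w => (β w).symm (match w with
      | Sum.inl v => a v
      | Sum.inr v => b v)
    refine ⟨z, ?_⟩
    rw [hf, Fintype.sum_sum_type, ← Finset.sum_add_distrib]
    conv_rhs => rw [← M.psum m]
    refine Finset.sum_congr rfl fun v _ => ?_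
    simp only [z, LinearEquiv.apply_symm_apply]
    exact hab v
  · intro v z
    rw [hpf, hf, Fintype.sum_sum_type]
    congr 1
    · rw [Finset.sum_eq_single v]
      · rw [show ((std s t d φ).p v z) (Sum.inl v) = z (Sum.inl v) from ofQ_p _ _ v z (Sum.inl v) rfl]
      · intro b _ hb
        rw [show ((std s t d φ).p v z) (Sum.inl b) = 0 from ofQ_p0 _ _ v z (Sum.inl b) hb]
        simp
      · simp
    · rw [Finset.sum_eq_single v]
      · rw [show ((std s t d φ).p v z) (Sum.inr v) = z (Sum.inr v) from ofQ_p _ _ v z (Sum.inr v) rfl]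
      · intro b _ hb
        rw [show ((std s t d φ).p v z) (Sum.inr b) = 0 from ofQ_p0 _ _ v z (Sum.inr b) hb]
        simp
      · simp
  · intro e z
    rw [show (std s t d φ).u e z = Pi.single (Sum.inl (s e)) _ from ofQ_u _ _ e z]
    rw [hf, Finset.sum_eq_single (Sum.inl (s e))]
    · rw [Pi.single_eq_same, hf, map_sum, Finset.sum_eq_single (Sum.inr (t e))]
      · simp only [φ, Matrix.toLin'_toMatrix', LinearMap.comp_apply, LinearEquiv.coe_coe,
          LinearEquiv.apply_symm_apply]
        rfl
      · rintro (v | v) _ hv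
        · exact hXu e v _ (Subtype.prop _)
        · have hv' : v ≠ t e := by rintro rfl; exact hv rfl
          rw [← hNp (Sum.inr v) _ (Subtype.prop _)]
          exact M.up0 _ _ _ hv'
      · simp
    · intro w _ hw
      rw [Pi.single_eq_of_ne hw]; simp
    · simp

theorem iso_Z (d : V ⊕ V → ℕ)
    (φ φ' : ∀ e, Matrix (Fin (d (Sum.inl (s e)))) (Fin (d (Sum.inr (t e)))) K)
    (h : DIso (std s t d φ) (std s t d φ')) :
    ∃ Z : ∀ w, Matrix (Fin (d w)) (Fin (d w)) K,
        ∀ e, φ' e = Z (Sum.inl (s e)) * φ e * Z (Sum.inr (t e)) := by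
  classical
  obtain ⟨F, hF, hFp, hFu⟩ := h
  let X : V ⊕ V → Type := fun w => Fin (d w) → K
  let F' : (∀ w, X w) →ₗ[K] (∀ w, X w) := F
  let E : (∀ w, X w) ≃ₗ[K] (∀ w, X w) := LinearEquiv.ofBijective F' hF
  let G : (∀ w, X w) →ₗ[K] (∀ w, X w) := E.symm.toLinearMap
  have hFG : ∀ z, F' (G z) = z := fun z => E.apply_symm_apply z
  refine ⟨fun w => match w with
    | Sum.inl v => LinearMap.toMatrix' (LinearMap.proj (Sum.inl v) ∘ₗ F' ∘ₗ LinearMap.single K X (Sum.inl v))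
    | Sum.inr v => LinearMap.toMatrix' (LinearMap.proj (Sum.inr v) ∘ₗ G ∘ₗ LinearMap.single K X (Sum.inr v)),
    fun e => ?_⟩
  apply Matrix.toLin'.injective
  rw [Matrix.toLin'_mul, Matrix.toLin'_mul]
  simp only [Matrix.toLin'_toMatrix']
  refine LinearMap.ext fun y => ?_
  simp only [LinearMap.comp_apply, LinearMap.proj_apply]
  have h1 := hFu e (G (Pi.single (Sum.inr (t e)) y))
  rw [show F (G (Pi.single (Sum.inr (t e)) y)) = _ from hFG _] at h1
  have h2 : (std s t d φ).u e (G (Pi.single (Sum.inr (t e)) y)) = Pi.single (Sum.inl (s e)) _ :=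
    ofQ_u X _ e (G (Pi.single (Sum.inr (t e)) y))
  have h3 : (std s t d φ').u e (Pi.single (Sum.inr (t e)) y) = Pi.single (Sum.inl (s e)) _ :=
    ofQ_u X _ e (Pi.single (Sum.inr (t e)) y)
  rw [h2, h3] at h1
  have h4 := congrFun h1 (Sum.inl (s e))
  rw [Pi.single_eq_same, Pi.single_eq_same] at h4
  exact h4.symm
end

set_option linter.unusedSectionVars false

section
variable {K : Type} [Field K] {V A : Type} [Fintype V] [Fintype A] {s t : A → V}
variable {H : Type} [AddCommGroup H] [Module K H] [Coalgebra K H] {g : V → H} {x : A → H}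

theorem tmul_mem_range {M : Type} [AddCommGroup M] [Module K M] (N : Submodule K M) (y : M)
    (hy : y ∈ N) (h : H) : y ⊗ₜ[K] h ∈ LinearMap.range (LinearMap.rTensor H N.subtype) :=
  ⟨(⟨y, hy⟩ : N) ⊗ₜ[K] h, by simp⟩

theorem hdv_fin (M : DM K s t) (hg : ∀ v, IsGrouplike K H (g v))
    (hx : ∀ e, x e ∈ skewPrim K H (g (s e)) (g (t e)))
    (k : ℕ) (b : Module.Basis (Fin k) K M.carrier) (vt : Fin k → V)
    (hp : ∀ i, M.p (vt i) (b i) = b i)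
    (hu : ∀ e i, M.u e (b i) ∈ Submodule.span K (b '' {j | j < i})) :
    HasDimVector K H (M.toComod hg hx) (fun h => Nat.card {i : Fin k // g (vt i) = h}) := by
  classical
  let F : Fin (k+1) → Submodule K M.carrier := fun i => Submodule.span K (b '' {j | j.val < i.val})
  have hFmono : ∀ i j : Fin (k+1), i ≤ j → F i ≤ F j := by
    intro i j hij
    apply Submodule.span_mono
    apply Set.image_mono
    intro a ha
    exact lt_of_lt_of_le (show a.val < i.val from ha) hij
  have hFp : ∀ i v m, m ∈ F i → M.p v m ∈ F i := by
    intro i v m hm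
    have : F i ≤ (F i).comap (M.p v) := by
      refine Submodule.span_le.2 ?_
      rintro _ ⟨j, hj, rfl⟩
      change M.p v (b j) ∈ F i
      by_cases h : v = vt j
      · subst h; rw [hp]; exact Submodule.subset_span ⟨j, hj, rfl⟩
      · rw [← hp, M.pp0 _ _ _ h]; exact zero_mem _
    exact this hm
  have hu' : ∀ e (i : Fin k), M.u e (b i) ∈ F i.castSucc := fun e i => hu e i
  have hFu : ∀ i e m, m ∈ F i → M.u e m ∈ F i := by
    intro i e m hm
    have : F i ≤ (F i).comap (M.u e) := by
      refine Submodule.span_le.2 ?_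
      rintro _ ⟨j, hj, rfl⟩
      exact hFmono j.castSucc i (le_of_lt hj) (hu' e j)
    exact this hm
  have hsub : ∀ i m, m ∈ F i → rhoDM M g x m ∈
      LinearMap.range (LinearMap.rTensor H (F i).subtype) := by
    intro i m hm
    rw [rhoDM_apply]
    exact add_mem (sum_mem fun v _ => tmul_mem_range _ _ (hFp i v m hm) _)
      (sum_mem fun e _ => tmul_mem_range _ _ (hFu i e m hm) _)
  have hsucc : ∀ i : Fin k, F i.succ = F i.castSucc ⊔ Submodule.span K {b i} := by
    intro i
    rw [← Submodule.span_union]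
    apply congrArg (Submodule.span K)
    ext m
    constructor
    · rintro ⟨j, hj, rfl⟩
      rcases Nat.lt_succ_iff_lt_or_eq.1 (show j.val < i.val + 1 from hj) with h | h
      · exact Or.inl ⟨j, h, rfl⟩
      · right; rw [Fin.ext h]; rfl
    · rintro (⟨j, hj, rfl⟩ | h)
      · exact ⟨j, Nat.lt_succ_of_lt hj, rfl⟩
      · rw [Set.mem_singleton_iff.1 h]; exact ⟨i, Nat.lt_succ_self _, rfl⟩
  have hmem : ∀ i : Fin k, b i ∈ F i.succ := fun i =>
    Submodule.subset_span ⟨i, Nat.lt_succ_self _, rfl⟩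
  have hnmem : ∀ i : Fin k, b i ∉ F i.castSucc := fun i =>
    b.linearIndependent.notMem_span_image (s := {j | j.val < i.castSucc.val}) (x := i)
      (fun h => lt_irrefl i.val h)
  have hlast : ∀ i : Fin k, ∀ m ∈ F i.succ, rhoDM M g x m - m ⊗ₜ[K] g (vt i) ∈
      LinearMap.range (LinearMap.rTensor H (F i.castSucc).subtype) := by
    intro i m hm
    let L : M.carrier →ₗ[K] M.carrier ⊗[K] H :=
      rhoDM M g x - (TensorProduct.mk K M.carrier H).flip (g (vt i))
    have : F i.succ ≤ (LinearMap.range (LinearMap.rTensor H (F i.castSucc).subtype)).comap L := by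
      rw [hsucc]
      refine sup_le ?_ ?_
      · intro m hm
        exact sub_mem (hsub _ m hm) (tmul_mem_range _ _ hm _)
      · rw [Submodule.span_singleton_le_iff_mem]
        change rhoDM M g x (b i) - b i ⊗ₜ[K] g (vt i) ∈
          LinearMap.range (LinearMap.rTensor H (F i.castSucc).subtype)
        have h := rhoDM_p M g x (vt i) (b i)
        rw [hp] at h
        rw [h, add_sub_cancel_left]
        exact sum_mem fun e _ => tmul_mem_range _ _ (hu' e i) _
    exact this hm
  refine ⟨k, F, fun i => g (vt i), ?_, ?_, fun i => hFmono _ _ (Fin.castSucc_lt_succ).le,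
    hsub, fun i => hg _, fun i => ⟨b i, hmem i, hnmem i, hsucc i⟩, hlast, fun h => rfl⟩
  · change Submodule.span K _ = ⊥
    simp
  · change Submodule.span K _ = ⊤
    rw [show {j : Fin k | j.val < (Fin.last k).val} = Set.univ from Set.eq_univ_of_forall fun j => j.2,
      Set.image_univ, b.span_eq]

theorem hdv (M : DM K s t) (hg : ∀ v, IsGrouplike K H (g v))
    (hx : ∀ e, x e ∈ skewPrim K H (g (s e)) (g (t e)))
    {B : Type} [Fintype B] (b : Module.Basis B K M.carrier) (vt : B → V) (lvl : B → ℕ)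
    (hp : ∀ i, M.p (vt i) (b i) = b i)
    (hu : ∀ e i, M.u e (b i) ∈ Submodule.span K (b '' {j | lvl j < lvl i})) :
    HasDimVector K H (M.toComod hg hx) (fun h => Nat.card {i : B // g (vt i) = h}) := by
  classical
  let e0 := (Fintype.equivFin B).symm
  let σ := Tuple.sort (lvl ∘ e0)
  have hσ : Monotone ((lvl ∘ e0) ∘ σ) := Tuple.monotone_sort _
  let E : Fin (Fintype.card B) ≃ B := σ.trans e0
  have hE : ∀ i j, i ≤ j → lvl (E i) ≤ lvl (E j) := fun i j h => hσ h
  have := hdv_fin M hg hx _ (b.reindex E.symm) (fun i => vt (E i)) (fun i => by simp [hp]) (by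
    intro e i
    rw [Module.Basis.reindex_apply]
    refine Submodule.span_mono ?_ (hu e _)
    rintro _ ⟨j, hj, rfl⟩
    refine ⟨E.symm j, ?_, by simp⟩
    by_contra hlt
    have := hE _ _ (not_lt.1 hlt)
    simp only [Equiv.apply_symm_apply] at this
    exact absurd hj (not_lt.2 this))
  convert this using 2 with h
  exact (Nat.card_congr (E.subtypeEquiv (p := fun i => g (vt (E i)) = h)
    (q := fun i => g (vt i) = h) (fun a => Iff.rfl))).symm

noncomputable def dimHd (g : V → H) (d : V ⊕ V → ℕ) (h : H) : ℕ :=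
  Nat.card {i : Σ w, Fin (d w) // g (vx i.1) = h}

theorem hdv_std (d : V ⊕ V → ℕ)
    (φ : ∀ e, Matrix (Fin (d (Sum.inl (s e)))) (Fin (d (Sum.inr (t e)))) K)
    (hg : ∀ v, IsGrouplike K H (g v))
    (hx : ∀ e, x e ∈ skewPrim K H (g (s e)) (g (t e))) :
    HasDimVector K H ((std s t d φ).toComod hg hx) (dimHd g d) := by
  classical
  let b : Module.Basis (Σ w, Fin (d w)) K (∀ w, Fin (d w) → K) :=
    Pi.basis (fun w => Pi.basisFun K (Fin (d w)))
  have hb : ∀ i, b i = Pi.single i.1 (Pi.single i.2 1) := by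
    intro i; simp [b]
  refine hdv (std s t d φ) hg hx b (fun i => vx i.1)
    (fun i => Sum.elim (fun _ => 0) (fun _ => 1) i.1) ?_ ?_
  · intro i
    funext w
    by_cases hw : vx w = vx i.1
    · exact ofQ_p _ _ _ _ w hw
    · refine (ofQ_p0 _ _ _ _ w hw).trans ?_
      rw [hb, Pi.single_eq_of_ne]
      rintro rfl; exact hw rfl
  · rintro e ⟨w, a⟩
    rw [show (std s t d φ).u e (b ⟨w, a⟩) = Pi.single (Sum.inl (s e)) _ from ofQ_u _ _ e _]
    rcases w with v | v
    · rw [hb, Pi.single_eq_of_ne (by simp), map_zero, Pi.single_zero]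
      exact zero_mem _
    · generalize (Matrix.toLin' (φ e)) (b ⟨Sum.inr v, a⟩ (Sum.inr (t e))) = y
      have : (Pi.single (Sum.inl (s e)) y : ∀ w, Fin (d w) → K) =
          ∑ a, y a • b ⟨Sum.inl (s e), a⟩ := by
        conv_lhs => rw [← Finset.univ_sum_single y]
        rw [show (Pi.single (Sum.inl (s e)) (∑ i, Pi.single i (y i)) : ∀ w, Fin (d w) → K) =
          LinearMap.single K (fun w => Fin (d w) → K) (Sum.inl (s e)) (∑ i, Pi.single i (y i)) from rfl,
          map_sum]
        refine Finset.sum_congr rfl fun a _ => ?_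
        rw [hb, LinearMap.single_apply, ← Pi.single_smul, ← Pi.single_smul, smul_eq_mul, mul_one]
      rw [this]
      refine Submodule.sum_mem _ fun a _ => Submodule.smul_mem _ _ (Submodule.subset_span ⟨_, ?_, rfl⟩)
      simp
end

set_option linter.unusedSectionVars false

section
variable {K : Type} [Field K] {V A : Type} [Fintype V] [Fintype A] {s t : A → V}
variable {H : Type} [AddCommGroup H] [Module K H] [Coalgebra K H] {g : V → H} {x : A → H}

theorem comodIso_trans {M N P : Comod K H} (h : ComodIso K H M N) (h' : ComodIso K H N P) :
    ComodIso K H M P := by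
  obtain ⟨f, hf⟩ := h
  obtain ⟨f', hf'⟩ := h'
  refine ⟨⟨f'.toLin ∘ₗ f.toLin, fun m => ?_⟩, hf'.comp hf⟩
  rw [LinearMap.comp_apply, f'.compat, f.compat, LinearMap.rTensor_comp, LinearMap.comp_apply]

theorem comodIso_symm {M N : Comod K H} (h : ComodIso K H M N) : ComodIso K H N M := by
  obtain ⟨f, hf⟩ := h
  let E := LinearEquiv.ofBijective f.toLin hf
  refine ⟨⟨E.symm.toLinearMap, fun m => ?_⟩, E.symm.bijective⟩
  obtain ⟨y, rfl⟩ := hf.2 m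
  have h1 : E.symm.toLinearMap (f.toLin y) = y := E.symm_apply_apply y
  rw [h1, f.compat, ← LinearMap.comp_apply, ← LinearMap.rTensor_comp]
  have h2 : E.symm.toLinearMap ∘ₗ f.toLin = LinearMap.id :=
    LinearMap.ext fun y => E.symm_apply_apply y
  rw [h2, LinearMap.rTensor_id]; rfl

theorem disc_DM (hg : ∀ v, IsGrouplike K H (g v))
    (hx : ∀ e, x e ∈ skewPrim K H (g (s e)) (g (t e)))
    (hli : LinearIndependent K (Sum.elim g x)) (hD : DiscreteCorepType K H) (d : V ⊕ V → ℕ) :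
    ∃ S : Set (DM K s t), S.Finite ∧ ∀ φ, DIndec (std s t d φ) →
      ∃ R ∈ S, DIso (std s t d φ) R := by
  classical
  obtain ⟨N, R, hR⟩ := hD (dimHd g d)
  let I := {i : Fin N // ∃ P : DM K s t, ComodIso K H (P.toComod hg hx) (R i)}
  choose P hP using fun i : I => i.2
  refine ⟨Set.range P, Set.finite_range P, fun φ hφ => ?_⟩
  obtain ⟨i, hi⟩ := hR _ ((indec_iff _ hg hx hli).2 hφ) (hdv_std d φ hg hx)
  refine ⟨P ⟨i, _, hi⟩, ⟨_, rfl⟩, ?_⟩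
  exact (iso_iff _ _ hg hx hli).1 (comodIso_trans hi (comodIso_symm (hP ⟨i, _, hi⟩)))

theorem DIndec.of_iso {M N : DM K s t} (h : DIso M N) (hN : DIndec N) : DIndec M := by
  obtain ⟨a, ha, ha1, ha2⟩ := h
  let E := LinearEquiv.ofBijective a ha
  have hE : ∀ m, E m = a m := fun _ => rfl
  refine ⟨?_, fun f hf hff => ?_⟩
  · obtain ⟨m, hm⟩ := hN.1
    obtain ⟨y, rfl⟩ := ha.2 m
    exact ⟨y, by rintro rfl; exact hm (map_zero _)⟩
  · let F : N.carrier →ₗ[K] N.carrier := a ∘ₗ f ∘ₗ E.symm.toLinearMap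
    have hF : ∀ m, F (a m) = a (f m) := fun m => by
      change a (f (E.symm (E m))) = _
      rw [E.symm_apply_apply]
    have := hN.2 F ⟨?_, ?_⟩ ?_
    · rcases this with h | h
      · left; intro m
        apply ha.1
        rw [← hF, h, map_zero]
      · right; intro m
        apply ha.1
        rw [← hF, h]
    · intro v m
      obtain ⟨y, rfl⟩ := ha.2 m
      rw [← ha1, hF, hF, hf.1, ha1]
    · intro v m
      obtain ⟨y, rfl⟩ := ha.2 m
      rw [← ha2, hF, hF, hf.2, ha2]
    · intro m
      obtain ⟨y, rfl⟩ := ha.2 m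
      rw [hF, hF, hff]

@[reducible] noncomputable def DM.zero (s t : A → V) : DM K s t where
  carrier := PUnit
  p _ := 0
  u _ := 0
  pp _ _ := rfl
  pp0 _ _ _ _ := rfl
  psum _ := rfl
  pu _ _ := rfl
  up _ _ := rfl
  uu _ _ _ := rfl

@[reducible] noncomputable def DM.prod (M N : DM K s t) : DM K s t where
  carrier := M.carrier × N.carrier
  p v := (M.p v).prodMap (N.p v)
  u e := (M.u e).prodMap (N.u e)
  pp _ _ := Prod.ext (M.pp _ _) (N.pp _ _)
  pp0 _ _ _ h := Prod.ext (M.pp0 _ _ _ h) (N.pp0 _ _ _ h)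
  psum m := by
    refine Prod.ext ?_ ?_
    · rw [Prod.fst_sum]; exact M.psum _
    · rw [Prod.snd_sum]; exact N.psum _
  pu _ _ := Prod.ext (M.pu _ _) (N.pu _ _)
  up _ _ := Prod.ext (M.up _ _) (N.up _ _)
  uu _ _ _ := Prod.ext (M.uu _ _ _) (N.uu _ _ _)

theorem DIso.prod {M N M' N' : DM K s t} (h : DIso M M') (h' : DIso N N') :
    DIso (M.prod N) (M'.prod N') := by
  obtain ⟨f, hf, hf1, hf2⟩ := h
  obtain ⟨f', hf', hf1', hf2'⟩ := h'
  refine ⟨f.prodMap f', hf.prodMap hf', fun v m => ?_, fun e m => ?_⟩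
  · exact Prod.ext (hf1 _ _) (hf1' _ _)
  · exact Prod.ext (hf2 _ _) (hf2' _ _)

@[reducible] noncomputable def DM.sub (M : DM K s t) (N : Submodule K M.carrier)
    (hp : ∀ v, ∀ m ∈ N, M.p v m ∈ N) (hu : ∀ e, ∀ m ∈ N, M.u e m ∈ N) : DM K s t where
  carrier := N
  p v := (M.p v).restrict (hp v)
  u e := (M.u e).restrict (hu e)
  pp _ _ := Subtype.ext (M.pp _ _)
  pp0 _ _ _ h := Subtype.ext (M.pp0 _ _ _ h)
  psum m := by
    apply Subtype.ext
    rw [Submodule.coe_sum]; exact M.psum _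
  pu _ _ := Subtype.ext (M.pu _ _)
  up _ _ := Subtype.ext (M.up _ _)
  uu _ _ _ := Subtype.ext (M.uu _ _ _)

theorem DM.decomp (M : DM K s t) (f : M.carrier →ₗ[K] M.carrier) (hf : DHomP M M f)
    (hff : ∀ m, f (f m) = f m) (h0 : ¬ ∀ m, f m = 0) (h1 : ¬ ∀ m, f m = m) :
    ∃ P Q : DM K s t, Module.finrank K P.carrier < Module.finrank K M.carrier ∧
      Module.finrank K Q.carrier < Module.finrank K M.carrier ∧ DIso M (P.prod Q) := by
  have hfg : ∀ m, f (m - f m) = 0 := fun m => by rw [map_sub, hff, sub_self]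
  refine ⟨M.sub (LinearMap.range f) ?_ ?_, M.sub (LinearMap.ker f) ?_ ?_, ?_, ?_, ?_⟩
  · rintro v _ ⟨m, rfl⟩; exact ⟨M.p v m, hf.1 v m⟩
  · rintro v _ ⟨m, rfl⟩; exact ⟨M.u v m, hf.2 v m⟩
  · intro v m hm; rw [LinearMap.mem_ker] at hm ⊢; rw [hf.1, hm, map_zero]
  · intro v m hm; rw [LinearMap.mem_ker] at hm ⊢; rw [hf.2, hm, map_zero]
  · refine Submodule.finrank_lt ?_
    intro h
    apply h1
    intro m
    obtain ⟨y, rfl⟩ : m ∈ LinearMap.range f := by rw [h]; trivial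
    exact hff y
  · refine Submodule.finrank_lt ?_
    intro h
    apply h0
    intro m
    have : m ∈ LinearMap.ker f := by rw [h]; trivial
    exact this
  · refine ⟨(f.codRestrict (LinearMap.range f) (fun m => ⟨m, rfl⟩)).prod
      ((LinearMap.id - f).codRestrict (LinearMap.ker f) (fun m => hfg m)), ⟨?_, ?_⟩, ?_, ?_⟩
    · refine (injective_iff_map_eq_zero _).2 fun m hm => ?_
      have h1 : f m = 0 := congrArg Subtype.val (congrArg Prod.fst hm)
      have h2 : m - f m = 0 := congrArg Subtype.val (congrArg Prod.snd hm)
      rw [h1, sub_zero] at h2; exact h2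
    · rintro ⟨⟨_, ⟨a, rfl⟩⟩, ⟨b, hb⟩⟩
      rw [LinearMap.mem_ker] at hb
      refine ⟨f a + b, Prod.ext (Subtype.ext ?_) (Subtype.ext ?_)⟩
      · change f (f a + b) = f a
        rw [map_add, hff, hb, add_zero]
      · change f a + b - f (f a + b) = b
        rw [map_add, hff, hb, add_zero, add_sub_cancel_left]
    · intro v m
      refine Prod.ext (Subtype.ext (hf.1 v m)) (Subtype.ext ?_)
      change M.p v m - f (M.p v m) = M.p v (m - f m)
      rw [map_sub, hf.1]
    · intro v m
      refine Prod.ext (Subtype.ext (hf.2 v m)) (Subtype.ext ?_)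
      change M.u v m - f (M.u v m) = M.u v (m - f m)
      rw [map_sub, hf.2]

theorem finrank_std {d : V ⊕ V → ℕ}
    {φ : ∀ e, Matrix (Fin (d (Sum.inl (s e)))) (Fin (d (Sum.inr (t e)))) K} {M : DM K s t}
    (h : DIso (std s t d φ) M) : Module.finrank K M.carrier = ∑ w, d w := by
  obtain ⟨f, hf, -⟩ := h
  have h1 := (LinearEquiv.ofBijective f hf).finrank_eq
  rw [← h1]
  change Module.finrank K (∀ w, Fin (d w) → K) = _
  rw [Module.finrank_pi_fintype]
  simp

theorem ks (hS : ∀ d : V ⊕ V → ℕ, ∃ S : Set (DM K s t), S.Finite ∧ ∀ φ, DIndec (std s t d φ) →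
      ∃ R ∈ S, DIso (std s t d φ) R) (n : ℕ) :
    ∃ S : Set (DM K s t), S.Finite ∧ ∀ M : DM K s t, Module.finrank K M.carrier < n →
      ∃ R ∈ S, DIso M R := by
  classical
  induction n with
  | zero => exact ⟨∅, Set.finite_empty, fun M hM => absurd hM (Nat.not_lt_zero _)⟩
  | succ n ih =>
    obtain ⟨T, hT, hT'⟩ := ih
    choose S hS1 hS2 using hS
    refine ⟨{DM.zero s t} ∪ (⋃ d ∈ Set.Iic (fun _ : V ⊕ V => n), S d) ∪ Set.image2 DM.prod T T,
      ((Set.finite_singleton _).union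
        ((Set.finite_Iic _).biUnion fun d _ => hS1 d)).union (hT.image2 _ hT), fun M hM => ?_⟩
    by_cases hz : ∀ m : M.carrier, m = 0
    · refine ⟨DM.zero s t, Or.inl (Or.inl rfl), 0, ⟨fun a b _ => ?_, fun y => ⟨0, rfl⟩⟩,
        fun v m => rfl, fun e m => rfl⟩
      rw [hz a, hz b]
    by_cases hI : DIndec M
    · obtain ⟨d, φ, hφ⟩ := std_iso M
      obtain ⟨R, hR, hR'⟩ := hS2 d φ (DIndec.of_iso hφ hI)
      refine ⟨R, Or.inl (Or.inr ?_), hφ.symm.trans hR'⟩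
      rw [Set.mem_iUnion₂]
      refine ⟨d, ?_, hR⟩
      rw [finrank_std hφ] at hM
      intro w
      have := Finset.single_le_sum (f := d) (fun _ _ => Nat.zero_le _) (Finset.mem_univ w)
      change d w ≤ n
      omega
    · have : ∃ f, DHomP M M f ∧ (∀ m, f (f m) = f m) ∧ (¬ ∀ m, f m = 0) ∧ (¬ ∀ m, f m = m) := by
        by_contra hcon
        apply hI
        refine ⟨by simpa using hz, fun f hf hff => ?_⟩
        by_contra hc
        rw [not_or] at hc
        exact hcon ⟨f, hf, hff, hc.1, hc.2⟩
      obtain ⟨f, hf, hff, h0, h1⟩ := this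
      obtain ⟨P, Q, hP, hQ, hPQ⟩ := M.decomp f hf hff h0 h1
      obtain ⟨R, hR, hR'⟩ := hT' P (by omega)
      obtain ⟨R2, hR2, hR2'⟩ := hT' Q (by omega)
      exact ⟨R.prod R2, Or.inr ⟨R, hR, R2, hR2, rfl⟩, hPQ.trans (hR'.prod hR2')⟩
end

set_option linter.unusedSectionVars false

section
variable {K : Type} [Field K] [IsAlgClosed K] {V A : Type} [Fintype V] [Fintype A] {s t : A → V}
variable {H : Type} [AddCommGroup H] [Module K H] [Coalgebra K H] {g : V → H} {x : A → H}

theorem disc_pos (hg : ∀ v, IsGrouplike K H (g v))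
    (hx : ∀ e, x e ∈ skewPrim K H (g (s e)) (g (t e)))
    (hli : LinearIndependent K (Sum.elim g x)) (hD : DiscreteCorepType K H) (d : V ⊕ V → ℕ)
    (hd : d ≠ 0) :
    ∑ e, d (Sum.inr (t e)) * d (Sum.inl (s e)) < ∑ w, d w ^ 2 := by
  classical
  have : Infinite K := IsAlgClosed.instInfinite
  obtain ⟨S, hS, hS'⟩ := ks (disc_DM hg hx hli hD) (∑ w, d w + 1)
  let I := {R : DM K s t // R ∈ S ∧ ∃ φ, DIso (std s t d φ) R}
  have : Finite I := (hS.subset (fun R hR => hR.1) : {R : DM K s t | R ∈ S ∧ ∃ φ,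
    DIso (std s t d φ) R}.Finite)
  choose φ hφ using fun i : I => i.2.2
  refine orbit_count s t d hd (Set.range φ) (Set.finite_range φ) fun φ' => ?_
  obtain ⟨R, hR, hR'⟩ := hS' (std s t d φ') (by
    rw [finrank_std (DIso.refl (std s t d φ'))]; omega)
  exact ⟨_, ⟨⟨R, hR, φ', hR'⟩, rfl⟩, iso_Z d _ _ ((hφ ⟨R, hR, φ', hR'⟩).trans hR'.symm)⟩

theorem part_one (hg : ∀ v, IsGrouplike K H (g v))
    (hx : ∀ e, x e ∈ skewPrim K H (g (s e)) (g (t e)))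
    (hli : LinearIndependent K (Sum.elim g x)) (hD : DiscreteCorepType K H) :
    FinCorepTypeOn K H (Submodule.span K (Set.range g ∪ Set.range x)) := by
  classical
  have hpos := disc_pos hg hx hli hD
  have hfin := qform_finite (fun e => Sum.inr (t e)) (fun e => Sum.inl (s e)) hpos
  choose S hS1 hS2 using disc_DM hg hx hli hD
  have hU := hfin.biUnion fun d _ => hS1 d
  have := hU.fintype
  let E := Fintype.equivFin
    (⋃ d ∈ {d : V ⊕ V → ℕ | ∑ w, d w ^ 2 ≤ 1 + ∑ e, d (Sum.inr (t e)) * d (Sum.inl (s e))}, S d)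
  refine ⟨_, fun i => (E.symm i).1.toComod hg hx, fun M hI hMf hM => ?_⟩
  obtain ⟨N, rfl⟩ := exists_DM M hg hx hli hMf hM
  rw [indec_iff N hg hx hli] at hI
  obtain ⟨d, φ, hφ⟩ := std_iso N
  have hI' := DIndec.of_iso hφ hI
  have hq := indec_q_le (src := fun e => Sum.inr (t e)) (tgt := fun e => Sum.inl (s e)) hpos _
    (indec_of_ofQ _ _ hI')
  simp only [Module.finrank_fin_fun] at hq
  obtain ⟨R, hR, hR'⟩ := hS2 d φ hI'
  refine ⟨E ⟨R, Set.mem_iUnion₂.2 ⟨d, hq, hR⟩⟩, ?_⟩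
  beta_reduce
  rw [Equiv.symm_apply_apply, iso_iff _ _ hg hx hli]
  exact hφ.symm.trans hR'

theorem part_two (hg : ∀ v, IsGrouplike K H (g v))
    (hx : ∀ e, x e ∈ skewPrim K H (g (s e)) (g (t e)))
    (hli : LinearIndependent K (Sum.elim g x)) (hD : DiscreteCorepType K H)
    (hb : ∀ v : V, (∀ e, s e ≠ v) ∨ (∀ e, t e ≠ v)) (d : V → ℤ) (hd : d ≠ 0) :
    ∑ e, d (s e) * d (t e) < ∑ v, (d v) ^ 2 := by
  classical
  let D : V ⊕ V → ℕ := Sum.elim (fun v => if ∃ e, t e = v then 0 else (d v).natAbs)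
    (fun v => if ∃ e, t e = v then (d v).natAbs else 0)
  have hDi : ∀ e, D (Sum.inl (s e)) = (d (s e)).natAbs := by
    intro e
    have : ¬ ∃ e', t e' = s e := by
      rintro ⟨e', he'⟩
      rcases hb (s e) with h | h
      · exact h e rfl
      · exact h e' he'
    simp [D, this]
  have hDo : ∀ e, D (Sum.inr (t e)) = (d (t e)).natAbs := by
    intro e
    have : ∃ e', t e' = t e := ⟨e, rfl⟩
    simp [D, this]
  have hD0 : D ≠ 0 := by
    obtain ⟨v, hv⟩ := Function.ne_iff.1 hd
    intro h
    have h1 := congrFun h (Sum.inl v)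
    have h2 := congrFun h (Sum.inr v)
    by_cases hc : ∃ e, t e = v
    · simp only [D, Sum.elim_inr, if_pos hc, Pi.zero_apply, Int.natAbs_eq_zero] at h2
      exact hv h2
    · simp only [D, Sum.elim_inl, if_neg hc, Pi.zero_apply, Int.natAbs_eq_zero] at h1
      exact hv h1
  have h := disc_pos hg hx hli hD D hD0
  have hs : ∑ w, D w ^ 2 = ∑ v, (d v).natAbs ^ 2 := by
    rw [Fintype.sum_sum_type, ← Finset.sum_add_distrib]
    refine Finset.sum_congr rfl fun v _ => ?_
    by_cases hc : ∃ e, t e = v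
    · simp only [D, Sum.elim_inr, Sum.elim_inl, if_pos hc]; ring
    · simp only [D, Sum.elim_inr, Sum.elim_inl, if_neg hc]; ring
  rw [hs] at h
  simp only [hDi, hDo] at h
  have h' : (∑ e, ((d (t e)).natAbs : ℤ) * ((d (s e)).natAbs : ℤ)) <
      ∑ v, ((d v).natAbs : ℤ) ^ 2 := by exact_mod_cast h
  simp only [Int.natCast_natAbs, sq_abs, ← abs_mul] at h'
  refine lt_of_le_of_lt (Finset.sum_le_sum fun e _ => ?_) h'
  rw [mul_comm]
  exact le_abs_self _
end

theorem not_discrete_of_infinite_subcoalgebra_KQ1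
    (K : Type) [Field K] [IsAlgClosed K]
    (H : Type) [Ring H] [HopfAlgebra K H] (hpointed : IsPointedCoalgebra K H) :
    -- a finite subquiver `Q'` of the Ext-quiver of `H` is given by finitely many distinct
    -- grouplike vertices `g v` and, for each arrow `e : s e → t e`, a skew primitive `x e`,
    -- such that the `g v` and `x e` are jointly linearly independent; the subcoalgebra
    -- `K Q'₁` is then their span.
    (∀ (V A : Type) [Fintype V] [Fintype A] (s t : A → V) (g : V → H) (x : A → H),
        Function.Injective g → (∀ v, IsGrouplike K H (g v)) →
        (∀ e, x e ∈ skewPrim K H (g (s e)) (g (t e))) →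
        LinearIndependent K (Sum.elim g x) →
        ¬ FinCorepTypeOn K H (Submodule.span K (Set.range g ∪ Set.range x)) →
        ¬ DiscreteCorepType K H) ∧
    -- in particular, if `Q'` is bipartite and its underlying graph is not a disjoint union
    -- of Dynkin diagrams (i.e. its Tits form is not positive definite), then `H` is not of
    -- discrete corepresentation type.
    (∀ (V A : Type) [Fintype V] [Fintype A] (s t : A → V) (g : V → H) (x : A → H),
        Function.Injective g → (∀ v, IsGrouplike K H (g v)) →
        (∀ e, x e ∈ skewPrim K H (g (s e)) (g (t e))) →
        LinearIndependent K (Sum.elim g x) →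
        (∀ v : V, (∀ e, s e ≠ v) ∨ (∀ e, t e ≠ v)) →
        (∃ d : V → ℤ, d ≠ 0 ∧ ∑ v, (d v) ^ 2 ≤ ∑ e, d (s e) * d (t e)) →
        ¬ DiscreteCorepType K H) := by
  refine ⟨?_, ?_⟩
  · intro V A _ _ s t g x _ hg hx hli hnf hD
    exact hnf (part_one hg hx hli hD)
  · rintro V A _ _ s t g x _ hg hx hli hb ⟨d, hd, hle⟩ hD
    exact absurd (part_two hg hx hli hD hb d hd) (not_lt.2 hle)
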